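/- arXiv:math/0412241 — 2 statements merged into one kernel-verified Lean document; each statement's English description precedes it below -/
import Mathlib

section
/- Let n ≥ 3 be an integer and let p satisfy 1 < p < n/(n−2). Then there exists a nontrivial classical solution of the Cauchy problem (P) with initial data g ≡ 0; that is, there exists a function u : (ℝⁿ∖{0}) × [0,∞) → ℝ, continuous on (ℝⁿ∖{0}) × [0,∞), C² in x and C¹ in t on (ℝⁿ∖{0}) × (0,∞), satisfying u_t = Δu − u^p and u ≥ 0 on (ℝⁿ∖{0}) × (0,∞), with u(x,0) = 0 for all x ≠ 0, such that u is not identically zero. -/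
open scoped BigOperators

/-- The Laplacian of `f : ℝⁿ → ℝ`, expressed as the sum of second directional
derivatives along the standard basis vectors. -/
noncomputable def laplacian {n : ℕ} (f : EuclideanSpace ℝ (Fin n) → ℝ)
    (x : EuclideanSpace ℝ (Fin n)) : ℝ :=
  ∑ i : Fin n, fderiv ℝ (fun y => fderiv ℝ f y (EuclideanSpace.single i 1)) x
    (EuclideanSpace.single i 1)

/-- A classical solution of the Cauchy problem (P):
`u_t = Δu − u^p` in `(ℝⁿ∖{0}) × (0,∞)`, `u ≥ 0`, `u(·,0) = g`,
with `u` continuous on `(ℝⁿ∖{0}) × [0,∞)`, `C²` in `x` and `C¹` in `t`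
on `(ℝⁿ∖{0}) × (0,∞)`. -/
structure IsClassicalSolution (n : ℕ) (p : ℝ) (g : EuclideanSpace ℝ (Fin n) → ℝ)
    (u : EuclideanSpace ℝ (Fin n) → ℝ → ℝ) : Prop where
  continuousOn : ContinuousOn (fun q : EuclideanSpace ℝ (Fin n) × ℝ => u q.1 q.2)
    {q : EuclideanSpace ℝ (Fin n) × ℝ | q.1 ≠ 0 ∧ 0 ≤ q.2}
  contDiff_space : ∀ x : EuclideanSpace ℝ (Fin n), x ≠ 0 → ∀ t : ℝ, 0 < t →
    ContDiffAt ℝ 2 (fun y => u y t) x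
  contDiff_time : ∀ x : EuclideanSpace ℝ (Fin n), x ≠ 0 → ∀ t : ℝ, 0 < t →
    ContDiffAt ℝ 1 (u x) t
  pde : ∀ x : EuclideanSpace ℝ (Fin n), x ≠ 0 → ∀ t : ℝ, 0 < t →
    deriv (u x) t = laplacian (fun y => u y t) x - u x t ^ p
  nonneg : ∀ x : EuclideanSpace ℝ (Fin n), x ≠ 0 → ∀ t : ℝ, 0 < t → 0 ≤ u x t
  initial : ∀ x : EuclideanSpace ℝ (Fin n), x ≠ 0 → u x 0 = g x

/-!
For `a = 1/(p-1)`, the function `|x|^(-2a) V(t/|x|²)` solves the equation on `ℝⁿ∖{0}`, with zero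
initial data, as soon as `V` solves a second order ODE on `(0, ∞)` with `V 0 = 0`. The condition on
`p` says exactly that the zeroth order coefficient `lam = 2a(2a+2-n)` is positive, so that
`c = lam^a` solves the ODE: it is the profile of the stationary singular solution. This constant is
a supersolution, and a positive solution `v ≤ c` of `V'' + q V' = 0` with `v 0 = 0`, where `q` is
the drift of the ODE, is a subsolution. A positive solution lies between them.

Adding `μ(μ - q)V` to both sides, with `μ` large, makes the nonlinearity increasing, and the
linear operator on the left then annihilates `exp (-μ r)`, which gives its Green operator in closed
form. A solution is a fixed point of a monotone map of the order interval `[v, c]`, which exists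
by Knaster–Tarski. The integrals are lower integrals of arbitrary functions: these are
monotone without measurability, so the order interval of all functions is a complete lattice on
which the map acts; regularity follows afterwards from the fixed point equation.
-/

open Set Filter Topology MeasureTheory

section SelfSimilar

theorem contDiffOn_two_of_hasDerivAt {s : Set ℝ} (hs : IsOpen s) {f f' f'' : ℝ → ℝ}
    (hf : ∀ x ∈ s, HasDerivAt f (f' x) x) (hf' : ∀ x ∈ s, HasDerivAt f' (f'' x) x)
    (hc : ContinuousOn f'' s) : ContDiffOn ℝ 2 f s := by
  have hf'_contDiff : ContDiffOn ℝ 1 f' s := by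
    rw [← zero_add 1, contDiffOn_succ_iff_deriv_of_isOpen hs]
    exact ⟨fun x hx => (hf' x hx).differentiableAt.differentiableWithinAt, by simp,
      contDiffOn_zero.2 (hc.congr fun x hx => (hf' x hx).deriv)⟩
  rw [← one_add_one_eq_two, contDiffOn_succ_iff_deriv_of_isOpen hs]
  exact ⟨fun x hx => (hf x hx).differentiableAt.differentiableWithinAt, by simp,
    hf'_contDiff.congr fun x hx => (hf x hx).deriv⟩

theorem fderiv_fderiv_comp_norm_sq {E : Type*} [NormedAddCommGroup E] [InnerProductSpace ℝ E]
    {f f' : ℝ → ℝ} {f'' : ℝ} {x : E} (hf : ∀ᶠ s in 𝓝 (‖x‖ ^ 2), HasDerivAt f (f' s) s)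
    (hf' : HasDerivAt f' f'' (‖x‖ ^ 2)) (v : E) :
    fderiv ℝ (fun y => fderiv ℝ (fun z => f (‖z‖ ^ 2)) y v) x v
      = 4 * f'' * inner ℝ x v ^ 2 + 2 * f' (‖x‖ ^ 2) * ‖v‖ ^ 2 := by
  have hsq (y : E) : HasFDerivAt (fun z : E => ‖z‖ ^ 2) (2 • innerSL ℝ y) y :=
    (hasStrictFDerivAt_norm_sq y).hasFDerivAt
  have hfirst : (fun y => fderiv ℝ (fun z => f (‖z‖ ^ 2)) y v)
      =ᶠ[𝓝 x] fun y => f' (‖y‖ ^ 2) * (2 * innerSL ℝ v y) := by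
    filter_upwards [(hsq x).continuousAt.eventually hf] with y hy
    have hcomp : HasFDerivAt (fun z => f (‖z‖ ^ 2)) _ y := hy.comp_hasFDerivAt y (hsq y)
    simp [hcomp.fderiv, real_inner_comm]
  have hsecond : HasFDerivAt (fun y => f' (‖y‖ ^ 2) * (2 * innerSL ℝ v y)) _ x :=
    (hf'.comp_hasFDerivAt x (hsq x)).mul (((innerSL ℝ v).hasFDerivAt (x := x)).const_mul 2)
  rw [hfirst.fderiv_eq, hsecond.fderiv]
  simp only [Function.comp_apply, innerSL_apply_apply, add_apply, smul_apply, smul_eq_mul,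
    nsmul_eq_mul, Nat.cast_ofNat, real_inner_self_eq_norm_sq, real_inner_comm v x]
  ring

theorem laplacian_comp_norm_sq {n : ℕ} {f f' : ℝ → ℝ} {f'' : ℝ} {x : EuclideanSpace ℝ (Fin n)}
    (hf : ∀ᶠ s in 𝓝 (‖x‖ ^ 2), HasDerivAt f (f' s) s) (hf' : HasDerivAt f' f'' (‖x‖ ^ 2)) :
    laplacian (fun y => f (‖y‖ ^ 2)) x = 4 * ‖x‖ ^ 2 * f'' + 2 * n * f' (‖x‖ ^ 2) := by
  rw [laplacian, Finset.sum_congr rfl fun i _ => fderiv_fderiv_comp_norm_sq hf hf' _,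
    EuclideanSpace.real_norm_sq_eq]
  simp [EuclideanSpace.inner_single_right, Finset.sum_add_distrib, ← Finset.mul_sum]
  ring

variable {E : Type*} [NormedAddCommGroup E] {a t : ℝ} {V V' : ℝ → ℝ}

/-- The function `|x|^(-2a) V(t / |x|²)`, invariant under the parabolic scaling
`u ↦ k^(2a) u(k x, k² t)`. -/
noncomputable def selfSimilar (a : ℝ) (V : ℝ → ℝ) (x : E) (t : ℝ) : ℝ :=
  (‖x‖ ^ 2) ^ (-a) * V (t / ‖x‖ ^ 2)

theorem continuousOn_selfSimilar (hV : ContinuousOn V (Ici 0)) :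
    ContinuousOn (fun q : E × ℝ => selfSimilar a V q.1 q.2) {q | q.1 ≠ 0 ∧ 0 ≤ q.2} := by
  have hpos (q : E × ℝ) (hq : q.1 ≠ 0 ∧ 0 ≤ q.2) : 0 < ‖q.1‖ ^ 2 := by
    have := hq.1
    positivity
  have hratio : ContinuousOn (fun q : E × ℝ => q.2 / ‖q.1‖ ^ 2) {q | q.1 ≠ 0 ∧ 0 ≤ q.2} :=
    ContinuousOn.div (by fun_prop) (by fun_prop) fun q hq => (hpos q hq).ne'
  exact (ContinuousOn.rpow_const (by fun_prop) fun q hq => Or.inl (hpos q hq).ne').mul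
    (hV.comp hratio fun q hq => div_nonneg hq.2 (hpos q hq).le)

theorem contDiffAt_selfSimilar_space [InnerProductSpace ℝ E] {k : WithTop ℕ∞} {x : E} (hx : x ≠ 0)
    (hV : ContDiffAt ℝ k V (t / ‖x‖ ^ 2)) : ContDiffAt ℝ k (fun y => selfSimilar a V y t) x := by
  have hsq : ContDiffAt ℝ k (fun y : E => ‖y‖ ^ 2) x := (contDiff_norm_sq ℝ).contDiffAt
  have hx0 : ‖x‖ ^ 2 ≠ 0 := by positivity
  exact (hsq.rpow_const_of_ne hx0).mul (hV.comp x (contDiffAt_const.div hsq hx0))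

theorem contDiffAt_selfSimilar_time {k : WithTop ℕ∞} {x : E}
    (hV : ContDiffAt ℝ k V (t / ‖x‖ ^ 2)) : ContDiffAt ℝ k (selfSimilar a V x) t :=
  contDiffAt_const.mul (hV.comp t (contDiffAt_id.div_const _))

theorem hasDerivAt_selfSimilar_time {x : E} {V'r : ℝ} (hx : x ≠ 0)
    (hV : HasDerivAt V V'r (t / ‖x‖ ^ 2)) :
    HasDerivAt (selfSimilar a V x) ((‖x‖ ^ 2) ^ (-a - 1) * V'r) t := by
  have hx0 : ‖x‖ ^ 2 ≠ 0 := by positivity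
  refine ((hV.comp t ((hasDerivAt_id t).div_const (‖x‖ ^ 2))).const_mul _).congr_deriv ?_
  rw [Real.rpow_sub_one hx0]
  ring

theorem hasDerivAt_rpow_mul_comp_div {s V'r : ℝ} (hs : 0 < s) (e : ℝ)
    (hV : HasDerivAt V V'r (t / s)) :
    HasDerivAt (fun s => s ^ e * V (t / s))
      (e * (s ^ (e - 1) * V (t / s)) - t * (s ^ (e - 2) * V'r)) s := by
  have hdiv : HasDerivAt (fun s => t / s) (-t / s ^ 2) s := by
    simpa using (hasDerivAt_const s t).fun_div (hasDerivAt_id s) hs.ne'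
  refine ((Real.hasDerivAt_rpow_const (Or.inl hs.ne')).mul (hV.comp s hdiv)).congr_deriv ?_
  rw [show e - 2 = e - 1 - 1 by ring, Real.rpow_sub_one hs.ne' (e - 1), Real.rpow_sub_one hs.ne' e,
    Function.comp_apply]
  field_simp
  ring

theorem laplacian_selfSimilar {n : ℕ} {x : EuclideanSpace ℝ (Fin n)} {V'' : ℝ} (hx : x ≠ 0)
    (hV : ∀ᶠ r in 𝓝 (t / ‖x‖ ^ 2), HasDerivAt V (V' r) r)
    (hV' : HasDerivAt V' V'' (t / ‖x‖ ^ 2)) :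
    laplacian (fun y => selfSimilar a V y t) x = (‖x‖ ^ 2) ^ (-a - 1) *
      (4 * (t / ‖x‖ ^ 2) ^ 2 * V'' + 4 * (2 * a + 2 - n / 2) * (t / ‖x‖ ^ 2) * V' (t / ‖x‖ ^ 2)
        + 2 * a * (2 * a + 2 - n) * V (t / ‖x‖ ^ 2)) := by
  have hx0 : 0 < ‖x‖ ^ 2 := by positivity
  have hcont : ContinuousAt (fun s => t / s) (‖x‖ ^ 2) :=
    continuousAt_const.div continuousAt_id hx0.ne'
  have hfirst : ∀ᶠ s in 𝓝 (‖x‖ ^ 2), HasDerivAt (fun s => s ^ (-a) * V (t / s))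
      (-a * (s ^ (-a - 1) * V (t / s)) - t * (s ^ (-a - 2) * V' (t / s))) s := by
    filter_upwards [hcont.eventually hV, lt_mem_nhds hx0] with s hVs hs
    exact hasDerivAt_rpow_mul_comp_div hs (-a) hVs
  have hsecond := ((hasDerivAt_rpow_mul_comp_div hx0 (-a - 1) hV.self_of_nhds).const_mul (-a)).sub
    ((hasDerivAt_rpow_mul_comp_div hx0 (-a - 2) hV').const_mul t)
  rw [show (fun y => selfSimilar a V y t) = fun y => ((‖y‖ ^ 2) ^ (-a) * V (t / ‖y‖ ^ 2)) from rfl,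
    laplacian_comp_norm_sq hfirst hsecond]
  simp only [show -a - 2 = -a - 1 - 1 by ring, show -a - 1 - 2 = -a - 1 - 1 - 1 by ring,
    show -a - 1 - 1 - 2 = -a - 1 - 1 - 1 - 1 by ring]
  simp only [Real.rpow_sub_one hx0.ne' (-a - 1), Real.rpow_sub_one hx0.ne' (-a - 1 - 1),
    Real.rpow_sub_one hx0.ne' (-a - 1 - 1 - 1)]
  field_simp
  ring

/-- `V` is a positive solution on `(0, ∞)`, with derivative `V'`, of the equation
`4r²V'' + (4br - 1)V' + lam V - V^p = 0`, continuous up to `r = 0`. For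
`b = 2a + 2 - n/2`, `lam = 2a(2a + 2 - n)` and `a = 1/(p - 1)` this is the equation for
`selfSimilar a V` to solve `u_t = Δu - u^p`; it is written with `V''` isolated. -/
structure IsSelfSimilarProfile (b lam p : ℝ) (V V' : ℝ → ℝ) : Prop where
  continuousOn : ContinuousOn V (Ici 0)
  pos : ∀ r, 0 < r → 0 < V r
  hasDerivAt : ∀ r, 0 < r → HasDerivAt V (V' r) r
  hasDerivAt_deriv : ∀ r, 0 < r →
    HasDerivAt V' ((V' r - 4 * b * r * V' r - lam * V r + V r ^ p) / (4 * r ^ 2)) r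

namespace IsSelfSimilarProfile

variable {b lam p : ℝ}

theorem contDiffOn (hV : IsSelfSimilarProfile b lam p V V') : ContDiffOn ℝ 2 V (Ioi 0) := by
  have hVc : ContinuousOn V (Ioi 0) := hV.continuousOn.mono Ioi_subset_Ici_self
  have hVc' : ContinuousOn V' (Ioi 0) := fun r hr =>
    (hV.hasDerivAt_deriv r hr).continuousAt.continuousWithinAt
  refine contDiffOn_two_of_hasDerivAt isOpen_Ioi hV.hasDerivAt hV.hasDerivAt_deriv ?_
  refine ContinuousOn.div ?_ (by fun_prop) fun r hr => by
    have : (0 : ℝ) < r := hr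
    positivity
  exact (by fun_prop : ContinuousOn (fun r => V' r - 4 * b * r * V' r - lam * V r) (Ioi 0)).add
    (hVc.rpow_const fun r hr => Or.inl (hV.pos r hr).ne')

theorem isClassicalSolution {n : ℕ} (ha : a * (p - 1) = 1)
    (hV : IsSelfSimilarProfile (2 * a + 2 - n / 2) (2 * a * (2 * a + 2 - n)) p V V') :
    IsClassicalSolution n p (fun x => selfSimilar a V x 0) (selfSimilar a V) := by
  have hr {x : EuclideanSpace ℝ (Fin n)} (hx : x ≠ 0) {t : ℝ} (ht : 0 < t) : 0 < t / ‖x‖ ^ 2 := by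
    positivity
  have hVat {r : ℝ} (h : 0 < r) : ContDiffAt ℝ 2 V r := hV.contDiffOn.contDiffAt (Ioi_mem_nhds h)
  refine ⟨continuousOn_selfSimilar hV.continuousOn,
    fun x hx t ht => contDiffAt_selfSimilar_space hx (hVat (hr hx ht)),
    fun x hx t ht => contDiffAt_selfSimilar_time ((hVat (hr hx ht)).of_le one_le_two),
    fun x hx t ht => ?_,
    fun x hx t ht => mul_nonneg (by positivity) (hV.pos _ (hr hx ht)).le, fun _ _ => rfl⟩
  have hx0 : 0 < ‖x‖ ^ 2 := by positivity
  have hpow : selfSimilar a V x t ^ p = (‖x‖ ^ 2) ^ (-a - 1) * V (t / ‖x‖ ^ 2) ^ p := by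
    rw [selfSimilar, Real.mul_rpow (by positivity) (hV.pos _ (hr hx ht)).le,
      ← Real.rpow_mul hx0.le, show -a * p = -a - 1 by linarith]
  rw [(hasDerivAt_selfSimilar_time hx (hV.hasDerivAt _ (hr hx ht))).deriv, hpow,
    laplacian_selfSimilar hx ((lt_mem_nhds (hr hx ht)).mono hV.hasDerivAt)
      (hV.hasDerivAt_deriv _ (hr hx ht)), ← mul_sub,
    mul_div_cancel₀ _ (by have := hr hx ht; positivity)]
  ring

end IsSelfSimilarProfile

end SelfSimilar

theorem exists_mem_Icc_eq_of_monotoneOn {α : Type*} [ConditionallyCompleteLattice α] {a b : α}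
    {T : α → α} (hT : MonotoneOn T (Icc a b)) (hab : a ≤ b) (ha : a ≤ T a) (hb : T b ≤ b) :
    ∃ w ∈ Icc a b, T w = w := by
  have : Fact (a ≤ b) := ⟨hab⟩
  let T' : Icc a b →o Icc a b :=
    { toFun x := ⟨T x, ha.trans (hT (left_mem_Icc.2 hab) x.2 x.2.1),
        (hT x.2 (right_mem_Icc.2 hab) x.2.2).trans hb⟩
      monotone' x y hxy := hT x.2 y.2 hxy }
  exact ⟨T'.lfp, T'.lfp.2, congrArg Subtype.val T'.map_lfp⟩

section LowerIntegral

open scoped ENNReal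

variable {a x l : ℝ} {f f' : ℝ → ℝ} {g : ℝ → ℝ≥0∞}

theorem lintegral_Ioi_ofReal_deriv (hc : ContinuousWithinAt f (Ici a) a)
    (hf : ∀ y ∈ Ioi a, HasDerivAt f (f' y) y) (hf' : ∀ y ∈ Ioi a, 0 ≤ f' y)
    (hl : Tendsto f atTop (𝓝 l)) :
    ∫⁻ y in Ioi a, ENNReal.ofReal (f' y) = ENNReal.ofReal (l - f a) := by
  rw [← ofReal_integral_eq_lintegral_ofReal (integrableOn_Ioi_deriv_of_nonneg hc hf hf' hl)
    (ae_restrict_of_forall_mem measurableSet_Ioi hf'),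
    integral_Ioi_of_hasDerivAt_of_nonneg hc hf hf' hl]

theorem lintegral_Ioc_ofReal_deriv (hax : a ≤ x) (hc : ContinuousOn f (Icc a x))
    (hf : ∀ y ∈ Ioo a x, HasDerivAt f (f' y) y) (hf' : ∀ y ∈ Ioo a x, 0 ≤ f' y) :
    ∫⁻ y in Ioc a x, ENNReal.ofReal (f' y) = ENNReal.ofReal (f x - f a) := by
  have hint : IntegrableOn f' (Ioc a x) :=
    intervalIntegral.integrableOn_deriv_of_nonneg hc hf hf'
  rw [← intervalIntegral.integral_eq_sub_of_hasDerivAt_of_le hax hc hf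
    ((intervalIntegrable_iff_integrableOn_Ioc_of_le hax).2 hint),
    intervalIntegral.integral_of_le hax, ← setIntegral_congr_set Ioo_ae_eq_Ioc,
    ← setLIntegral_congr Ioo_ae_eq_Ioc, ofReal_integral_eq_lintegral_ofReal
    (hint.mono_set Ioo_subset_Ioc_self) (ae_restrict_of_forall_mem measurableSet_Ioo hf')]

theorem setIntegral_toReal {s : Set ℝ} (hg : AEMeasurable g (volume.restrict s))
    (hs : ∫⁻ y in s, g y ≠ ∞) : ∫ y in s, (g y).toReal = (∫⁻ y in s, g y).toReal :=
  integral_toReal hg (ae_lt_top' hg hs)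

theorem continuousOn_integral_Ioc (hint : ∀ y, IntegrableOn f (Ioc a y)) :
    ContinuousOn (fun y => ∫ z in Ioc a y, f z) (Ici a) := fun y hy =>
  (intervalIntegral.continuousOn_primitive
    ((integrableOn_Icc_iff_integrableOn_Ioc).2 (hint (y + 1))) y
    ⟨hy, (lt_add_one y).le⟩).mono_of_mem_nhdsWithin
    (mem_nhdsWithin.2 ⟨Iio (y + 1), isOpen_Iio, lt_add_one y, fun _ hz => ⟨hz.2, hz.1.le⟩⟩)

theorem continuousOn_toReal_lintegral_Ioc (hg : AEMeasurable g (volume.restrict (Ioi a)))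
    (hfin : ∀ y, ∫⁻ z in Ioc a y, g z ≠ ∞) :
    ContinuousOn (fun y => (∫⁻ z in Ioc a y, g z).toReal) (Ici a) := by
  have hg_Ioc (y : ℝ) : AEMeasurable g (volume.restrict (Ioc a y)) :=
    hg.mono_set Ioc_subset_Ioi_self
  simp only [← setIntegral_toReal (hg_Ioc _) (hfin _)]
  exact continuousOn_integral_Ioc fun y =>
    integrable_toReal_of_lintegral_ne_top (hg_Ioc y) (hfin y)

theorem hasDerivAt_integral_Ioi (hf : ContinuousOn f (Ioi a))
    (hint : ∀ y, a < y → IntegrableOn f (Ioi y)) (hx : a < x) :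
    HasDerivAt (fun y => ∫ z in Ioi y, f z) (-f x) x := by
  obtain ⟨y, hay, hyx⟩ := exists_between hx
  have hinterval : IntervalIntegrable f volume x y :=
    intervalIntegrable_iff.2 ((hint y hay).mono_set (uIoc_of_ge hyx.le ▸ Ioc_subset_Ioi_self))
  refine (((intervalIntegral.integral_hasDerivAt_right hinterval.symm
    (hf.stronglyMeasurableAtFilter isOpen_Ioi x hx)
    (hf.continuousAt (Ioi_mem_nhds hx))).const_sub
      (∫ z in Ioi y, f z))).congr_of_eventuallyEq ?_
  filter_upwards [lt_mem_nhds hx] with z hz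
  rw [← intervalIntegral.integral_Ioi_sub_Ioi' (hint y hay) (hint z hz), sub_sub_cancel]

theorem hasDerivAt_integral_Ioc (hf : ContinuousOn f (Ioi a))
    (hint : ∀ y, IntegrableOn f (Ioc a y)) (hx : a < x) :
    HasDerivAt (fun y => ∫ z in Ioc a y, f z) (f x) x := by
  refine (intervalIntegral.integral_hasDerivAt_right
    ((intervalIntegrable_iff_integrableOn_Ioc_of_le hx.le).2 (hint x))
    (hf.stronglyMeasurableAtFilter isOpen_Ioi x hx)
    (hf.continuousAt (Ioi_mem_nhds hx))).congr_of_eventuallyEq ?_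
  filter_upwards [lt_mem_nhds hx] with y hy
  exact (intervalIntegral.integral_of_le hy.le).symm

theorem hasDerivAt_toReal_lintegral_Ioi (hg : ContinuousOn g (Ioi a))
    (hg_top : ∀ y, a < y → g y ≠ ∞) (hfin : ∀ y, a < y → ∫⁻ z in Ioi y, g z ≠ ∞) (hx : a < x) :
    HasDerivAt (fun y => (∫⁻ z in Ioi y, g z).toReal) (-(g x).toReal) x := by
  have hmeas (y : ℝ) (hy : a < y) : AEMeasurable g (volume.restrict (Ioi y)) :=
    (hg.mono (Ioi_subset_Ioi hy.le)).aemeasurable measurableSet_Ioi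
  refine (hasDerivAt_integral_Ioi (ENNReal.continuousOn_toReal.comp hg hg_top)
    (fun y hy => integrable_toReal_of_lintegral_ne_top (hmeas y hy) (hfin y hy))
    hx).congr_of_eventuallyEq ?_
  filter_upwards [lt_mem_nhds hx] with y hy
  exact (setIntegral_toReal (hmeas y hy) (hfin y hy)).symm

theorem hasDerivAt_toReal_lintegral_Ioc (hg : ContinuousOn g (Ioi a))
    (hg_top : ∀ y, a < y → g y ≠ ∞) (hfin : ∀ y, ∫⁻ z in Ioc a y, g z ≠ ∞) (hx : a < x) :
    HasDerivAt (fun y => (∫⁻ z in Ioc a y, g z).toReal) (g x).toReal x := by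
  have hmeas (y : ℝ) : AEMeasurable g (volume.restrict (Ioc a y)) :=
    (hg.mono Ioc_subset_Ioi_self).aemeasurable measurableSet_Ioc
  simp only [← setIntegral_toReal (hmeas _) (hfin _)]
  exact hasDerivAt_integral_Ioc (ENNReal.continuousOn_toReal.comp hg hg_top)
    (fun y => integrable_toReal_of_lintegral_ne_top (hmeas y) (hfin y)) hx

end LowerIntegral

section Green

open scoped ENNReal

/-- `∫_ρ^∞ P φ h` with `φ t = exp (-μ t)`: for a solution `w` of `w'' + q w' = μ (μ - q) w - h`
and `P' = q P` this is the flux `P φ² (w / φ)'` at `ρ`, if it vanishes at infinity. -/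
noncomputable def greenFlux (P : ℝ → ℝ) (μ : ℝ) (h : ℝ → ℝ) (ρ : ℝ) : ℝ≥0∞ :=
  ∫⁻ t in Ioi ρ, ENNReal.ofReal (P t * Real.exp (-μ * t) * h t)

/-- The solution `φ(r) ∫₀ʳ (∫_ρ^∞ P φ h) / (P φ²) dρ`, `φ t = exp (-μ t)`, of
`w'' + q w' = μ (μ - q) w - h`, `w 0 = 0`, where `P' = q P`. It is a lower integral so as to be
monotone in `h` without any measurability assumption. -/
noncomputable def greenOperator (P : ℝ → ℝ) (μ : ℝ) (h : ℝ → ℝ) (r : ℝ) : ℝ≥0∞ :=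
  ENNReal.ofReal (Real.exp (-μ * r)) *
    ∫⁻ ρ in Ioc 0 r, ENNReal.ofReal (Real.exp (2 * μ * ρ) / P ρ) * greenFlux P μ h ρ

/-- `P` is a positive solution of `P' = q P` on `(0, ∞)`. -/
structure IsIntegratingFactor (q P : ℝ → ℝ) : Prop where
  pos : ∀ t, 0 < t → 0 < P t
  hasDerivAt : ∀ t, 0 < t → HasDerivAt P (q t * P t) t

/-- `μ` is the rate of a decaying exponential `φ t = exp (-μ t)` with `φ'' + q φ' ≥ 0` on `(0, ∞)`
and `P φ → 0` at infinity. -/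
structure IsDecayRate (q P : ℝ → ℝ) (μ : ℝ) : Prop where
  pos : 0 < μ
  drift_le : ∀ t, 0 < t → q t ≤ μ
  tendsto : Tendsto (fun t => P t * Real.exp (-μ * t)) atTop (𝓝 0)

variable {q P : ℝ → ℝ} {μ c r ρ : ℝ} {h h₁ h₂ w v : ℝ → ℝ}

theorem greenFlux_antitone : Antitone (greenFlux P μ h) := fun _ _ hρ =>
  lintegral_mono_set (Ioi_subset_Ioi hρ)

theorem greenFlux_mono (hP : ∀ t, 0 < t → 0 ≤ P t) (hh : ∀ t, 0 < t → h₁ t ≤ h₂ t)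
    (hρ : 0 ≤ ρ) : greenFlux P μ h₁ ρ ≤ greenFlux P μ h₂ ρ :=
  setLIntegral_mono' measurableSet_Ioi fun t ht => by
    have ht0 : 0 < t := hρ.trans_lt ht
    have := hP t ht0
    gcongr
    exact hh t ht0

theorem greenOperator_mono (hP : ∀ t, 0 < t → 0 ≤ P t) (hh : ∀ t, 0 < t → h₁ t ≤ h₂ t) (r : ℝ) :
    greenOperator P μ h₁ r ≤ greenOperator P μ h₂ r := by
  unfold greenOperator
  gcongr 1
  refine setLIntegral_mono' measurableSet_Ioc fun ρ hρ => ?_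
  gcongr
  exact greenFlux_mono hP hh hρ.1.le

theorem greenOperator_of_nonpos (hr : r ≤ 0) : greenOperator P μ h r = 0 := by
  simp [greenOperator, Ioc_eq_empty_of_le hr]

theorem lintegral_ne_top_of_greenOperator_ne_top (hr : greenOperator P μ h r ≠ ∞) :
    ∫⁻ ρ in Ioc 0 r, ENNReal.ofReal (Real.exp (2 * μ * ρ) / P ρ) * greenFlux P μ h ρ ≠ ∞ :=
  fun htop => hr (by rw [greenOperator, htop, ENNReal.mul_top (by positivity)])

theorem continuousOn_toReal_greenOperator (hP : ContinuousOn P (Ioi 0))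
    (hfin : ∀ r, greenOperator P μ h r ≠ ∞) :
    ContinuousOn (fun r => (greenOperator P μ h r).toReal) (Ici 0) := by
  have hweight : AEMeasurable (fun ρ => ENNReal.ofReal (Real.exp (2 * μ * ρ) / P ρ) *
      greenFlux P μ h ρ) (volume.restrict (Ioi 0)) :=
    ((by fun_prop : Measurable fun ρ => Real.exp (2 * μ * ρ)).aemeasurable.div
      (hP.aemeasurable measurableSet_Ioi)).ennreal_ofReal.mul
        greenFlux_antitone.measurable.aemeasurable
  simp only [greenOperator, ENNReal.toReal_mul, ENNReal.toReal_ofReal (Real.exp_pos _).le]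
  exact ContinuousOn.mul (by fun_prop) (continuousOn_toReal_lintegral_Ioc hweight
    fun r => lintegral_ne_top_of_greenOperator_ne_top (hfin r))

namespace IsIntegratingFactor

theorem continuousOn (hP : IsIntegratingFactor q P) : ContinuousOn P (Ioi 0) := fun t ht =>
  (hP.hasDerivAt t ht).continuousAt.continuousWithinAt

section ConstantFlux

variable {η : ℝ}

theorem hasDerivAt_constant_flux {t : ℝ} (hP : IsIntegratingFactor q P) (ht : 0 < t)
    (hv' : HasDerivAt v (η / P t) t) :
    HasDerivAt (fun t => -(η * Real.exp (-μ * t) + μ * (P t * Real.exp (-μ * t) * v t)))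
      (P t * Real.exp (-μ * t) * (μ * (μ - q t) * v t)) t := by
  have hexp : HasDerivAt (fun t => Real.exp (-μ * t)) (Real.exp (-μ * t) * -μ) t := by
    simpa using ((hasDerivAt_id t).const_mul (-μ)).exp
  refine ((hexp.const_mul η).add
    ((((hP.hasDerivAt t ht).mul hexp).mul hv').const_mul μ)).neg.congr_deriv ?_
  have := (hP.pos t ht).ne'
  simp only [Pi.mul_apply]
  field_simp
  ring

theorem tendsto_constant_flux (hP : IsIntegratingFactor q P) (hμ : IsDecayRate q P μ)
    (hv : ∀ t, 0 < t → v t ∈ Icc 0 c) :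
    Tendsto (fun t => -(η * Real.exp (-μ * t) + μ * (P t * Real.exp (-μ * t) * v t))) atTop
      (𝓝 0) := by
  have hexp : Tendsto (fun t => Real.exp (-μ * t)) atTop (𝓝 0) :=
    Real.tendsto_exp_atBot.comp (tendsto_id.const_mul_atTop_of_neg (neg_neg_of_pos hμ.pos))
  have hPexp (t : ℝ) (ht : 0 < t) : 0 ≤ P t * Real.exp (-μ * t) :=
    mul_nonneg (hP.pos t ht).le (Real.exp_pos _).le
  have hPv : Tendsto (fun t => P t * Real.exp (-μ * t) * v t) atTop (𝓝 0) :=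
    squeeze_zero'
      ((eventually_gt_atTop 0).mono fun t ht => mul_nonneg (hPexp t ht) (hv t ht).1)
      ((eventually_gt_atTop 0).mono fun t ht =>
        mul_le_mul_of_nonneg_left (hv t ht).2 (hPexp t ht))
      (by simpa using hμ.tendsto.mul_const c)
  simpa using ((hexp.const_mul η).add (hPv.const_mul μ)).neg

theorem greenFlux_of_constant_flux (hP : IsIntegratingFactor q P) (hμ : IsDecayRate q P μ)
    (hv : ∀ t, 0 < t → v t ∈ Icc 0 c) (hv' : ∀ t, 0 < t → HasDerivAt v (η / P t) t)
    (hρ : 0 < ρ) :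
    greenFlux P μ (fun t => μ * (μ - q t) * v t) ρ =
      ENNReal.ofReal (η * Real.exp (-μ * ρ) + μ * P ρ * Real.exp (-μ * ρ) * v ρ) := by
  have hderiv (t : ℝ) (ht : 0 < t) := hP.hasDerivAt_constant_flux (μ := μ) ht (hv' t ht)
  rw [greenFlux, lintegral_Ioi_ofReal_deriv (hderiv ρ hρ).continuousAt.continuousWithinAt
    (fun t ht => hderiv t (hρ.trans ht)) (fun t ht => ?_) (hP.tendsto_constant_flux hμ hv)]
  · congr 1
    ring
  · have ht0 : 0 < t := hρ.trans ht
    have := hμ.pos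
    have := hP.pos t ht0
    have := sub_nonneg.2 (hμ.drift_le t ht0)
    have := (hv t ht0).1
    positivity

theorem greenOperator_of_constant_flux (hP : IsIntegratingFactor q P) (hμ : IsDecayRate q P μ)
    (hη : 0 ≤ η) (hvc : ContinuousOn v (Ici 0)) (hv : ∀ t, 0 < t → v t ∈ Icc 0 c)
    (hv' : ∀ t, 0 < t → HasDerivAt v (η / P t) t) (hr : 0 ≤ r) :
    greenOperator P μ (fun t => μ * (μ - q t) * v t) r =
      ENNReal.ofReal (v r - Real.exp (-μ * r) * v 0) := by
  have hderiv (ρ : ℝ) (hρ : 0 < ρ) : HasDerivAt (fun ρ => Real.exp (μ * ρ) * v ρ)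
      (Real.exp (μ * ρ) * (η / P ρ + μ * v ρ)) ρ := by
    refine (((hasDerivAt_id ρ).const_mul μ).exp.mul (hv' ρ hρ)).congr_deriv ?_
    simp only [id_eq, mul_one]
    ring
  have hnonneg (ρ : ℝ) (hρ : 0 < ρ) : 0 ≤ Real.exp (μ * ρ) * (η / P ρ + μ * v ρ) := by
    have := hμ.pos
    have := hP.pos ρ hρ
    have := (hv ρ hρ).1
    positivity
  have hflux (ρ : ℝ) (hρ : 0 < ρ) : ENNReal.ofReal (Real.exp (2 * μ * ρ) / P ρ) *
      greenFlux P μ (fun t => μ * (μ - q t) * v t) ρ =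
        ENNReal.ofReal (Real.exp (μ * ρ) * (η / P ρ + μ * v ρ)) := by
    have hPρ := hP.pos ρ hρ
    rw [hP.greenFlux_of_constant_flux hμ hv hv' hρ, ← ENNReal.ofReal_mul (by positivity),
      show 2 * μ * ρ = μ * ρ + μ * ρ by ring, Real.exp_add, neg_mul, Real.exp_neg]
    congr 1
    field_simp
  rw [greenOperator, setLIntegral_congr_fun measurableSet_Ioc fun ρ hρ => hflux ρ hρ.1,
    lintegral_Ioc_ofReal_deriv hr (ContinuousOn.mul (by fun_prop) (hvc.mono Icc_subset_Ici_self))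
      (fun ρ hρ => hderiv ρ hρ.1) (fun ρ hρ => hnonneg ρ hρ.1),
    ← ENNReal.ofReal_mul (by positivity)]
  simp [mul_sub, ← mul_assoc, ← Real.exp_add]

theorem greenFlux_const (hP : IsIntegratingFactor q P) (hμ : IsDecayRate q P μ)
    (hc : 0 ≤ c) (hρ : 0 < ρ) :
    greenFlux P μ (fun t => μ * (μ - q t) * c) ρ =
      ENNReal.ofReal (μ * P ρ * Real.exp (-μ * ρ) * c) := by
  simpa using hP.greenFlux_of_constant_flux (η := 0) (v := fun _ => c) hμ
    (fun _ _ => right_mem_Icc.2 hc) (fun t _ => by simpa using hasDerivAt_const t c) hρ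

theorem greenOperator_const (hP : IsIntegratingFactor q P) (hμ : IsDecayRate q P μ)
    (hc : 0 ≤ c) (hr : 0 ≤ r) :
    greenOperator P μ (fun t => μ * (μ - q t) * c) r =
      ENNReal.ofReal (c - Real.exp (-μ * r) * c) :=
  hP.greenOperator_of_constant_flux (η := 0) (v := fun _ => c) hμ le_rfl
    continuousOn_const (fun _ _ => right_mem_Icc.2 hc)
    (fun t _ => by simpa using hasDerivAt_const t c) hr

end ConstantFlux

section Regularity

theorem hasDerivAt_toReal_greenFlux (hP : IsIntegratingFactor q P)
    (hh : ContinuousOn h (Ioi 0)) (hh₀ : ∀ t, 0 < t → 0 ≤ h t)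
    (hfin : ∀ ρ, 0 < ρ → greenFlux P μ h ρ ≠ ∞) (hρ : 0 < ρ) :
    HasDerivAt (fun ρ => (greenFlux P μ h ρ).toReal) (-(P ρ * Real.exp (-μ * ρ) * h ρ)) ρ := by
  have hcont : ContinuousOn (fun t => ENNReal.ofReal (P t * Real.exp (-μ * t) * h t)) (Ioi 0) :=
    ENNReal.continuous_ofReal.comp_continuousOn ((hP.continuousOn.mul (by fun_prop)).mul hh)
  refine (hasDerivAt_toReal_lintegral_Ioi hcont (by simp) hfin hρ).congr_deriv ?_
  have := hP.pos ρ hρ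
  have := hh₀ ρ hρ
  rw [ENNReal.toReal_ofReal (by positivity)]

theorem hasDerivAt_toReal_greenOperator (hP : IsIntegratingFactor q P)
    (hflux : ContinuousOn (fun ρ => (greenFlux P μ h ρ).toReal) (Ioi 0))
    (hflux_fin : ∀ ρ, 0 < ρ → greenFlux P μ h ρ ≠ ∞) (hfin : ∀ r, greenOperator P μ h r ≠ ∞)
    (hr : 0 < r) :
    HasDerivAt (fun r => (greenOperator P μ h r).toReal)
      (-μ * (greenOperator P μ h r).toReal +
        Real.exp (μ * r) / P r * (greenFlux P μ h r).toReal) r := by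
  have hcont : ContinuousOn (fun ρ => ENNReal.ofReal (Real.exp (2 * μ * ρ) / P ρ) *
      greenFlux P μ h ρ) (Ioi 0) := by
    have hweight : ContinuousOn (fun ρ => Real.exp (2 * μ * ρ) / P ρ) (Ioi 0) :=
      ContinuousOn.div (by fun_prop) hP.continuousOn fun ρ hρ => (hP.pos ρ hρ).ne'
    refine (ENNReal.continuous_ofReal.comp_continuousOn (hweight.fun_mul hflux)).congr
      fun ρ hρ => ?_
    have := hP.pos ρ hρ
    rw [Function.comp_apply, ENNReal.ofReal_mul (by positivity),
      ENNReal.ofReal_toReal (hflux_fin ρ hρ)]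
  have hprimitive := hasDerivAt_toReal_lintegral_Ioc hcont
    (fun ρ hρ => ENNReal.mul_ne_top ENNReal.ofReal_ne_top (hflux_fin ρ hρ))
    (fun r => lintegral_ne_top_of_greenOperator_ne_top (hfin r)) hr
  have := hP.pos r hr
  simp only [greenOperator, ENNReal.toReal_mul, ENNReal.toReal_ofReal (Real.exp_pos _).le]
  refine (((hasDerivAt_id r).const_mul (-μ)).exp.mul hprimitive).congr_deriv ?_
  rw [ENNReal.toReal_mul, ENNReal.toReal_ofReal (by positivity)]
  simp only [id_eq, mul_one, show 2 * μ * r = μ * r + μ * r by ring, Real.exp_add, neg_mul,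
    Real.exp_neg]
  field_simp

theorem exists_hasDerivAt_toReal_greenOperator (hP : IsIntegratingFactor q P)
    (hh : ContinuousOn h (Ioi 0)) (hh₀ : ∀ t, 0 < t → 0 ≤ h t)
    (hflux_fin : ∀ ρ, 0 < ρ → greenFlux P μ h ρ ≠ ∞) (hfin : ∀ r, greenOperator P μ h r ≠ ∞) :
    ∃ w' : ℝ → ℝ, ∀ r, 0 < r →
      HasDerivAt (fun r => (greenOperator P μ h r).toReal) (w' r) r ∧
      HasDerivAt w' (μ * (μ - q r) * (greenOperator P μ h r).toReal - q r * w' r - h r) r := by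
  have hflux (ρ : ℝ) (hρ : 0 < ρ) := hP.hasDerivAt_toReal_greenFlux hh hh₀ hflux_fin hρ
  have hw (r : ℝ) (hr : 0 < r) := hP.hasDerivAt_toReal_greenOperator
    (fun ρ hρ => (hflux ρ hρ).continuousAt.continuousWithinAt) hflux_fin hfin hr
  refine ⟨_, fun r hr => ⟨hw r hr, ?_⟩⟩
  have hPr := hP.pos r hr
  have hexp : HasDerivAt (fun r => Real.exp (μ * r)) (Real.exp (μ * r) * μ) r := by
    simpa using ((hasDerivAt_id r).const_mul μ).exp
  refine (((hw r hr).const_mul (-μ)).add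
    ((hexp.div (hP.hasDerivAt r hr) hPr.ne').mul (hflux r hr))).congr_deriv ?_
  simp only [Pi.div_apply, neg_mul, Real.exp_neg]
  field_simp
  ring

end Regularity
end IsIntegratingFactor

section Nonlinear

variable {F : ℝ → ℝ → ℝ}

/-- The map whose fixed points solve `w'' + q w' + F(r, w) = 0`, `w 0 = 0`: the linear term
`μ (μ - q) w` is added to both sides before inverting, which makes the map monotone. -/
noncomputable def greenMap (q P : ℝ → ℝ) (μ : ℝ) (F : ℝ → ℝ → ℝ) (w : ℝ → ℝ) (r : ℝ) : ℝ :=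
  (greenOperator P μ (fun t => μ * (μ - q t) * w t + F t (w t)) r).toReal

/-- A nonnegative source on `[0, c]`, vanishing at `c`, which becomes monotone in `w` when
`μ (μ - q) w` is added to it. -/
structure IsQuasimonotoneSource (q : ℝ → ℝ) (μ : ℝ) (F : ℝ → ℝ → ℝ) (c : ℝ) : Prop where
  continuousOn : ContinuousOn (Function.uncurry F) (Ioi 0 ×ˢ Icc 0 c)
  nonneg : ∀ t, 0 < t → ∀ x ∈ Icc 0 c, 0 ≤ F t x
  eq_zero : ∀ t, 0 < t → F t c = 0
  monotoneOn : ∀ t, 0 < t → MonotoneOn (fun x => μ * (μ - q t) * x + F t x) (Icc 0 c)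

namespace IsQuasimonotoneSource

variable (hF : IsQuasimonotoneSource q μ F c) (hP : IsIntegratingFactor q P)
  (hμ : IsDecayRate q P μ)

include hF

theorem le_mul {t x : ℝ} (ht : 0 < t) (hx : x ∈ Icc 0 c) :
    μ * (μ - q t) * x + F t x ≤ μ * (μ - q t) * c := by
  simpa [hF.eq_zero t ht] using
    hF.monotoneOn t ht hx (right_mem_Icc.2 (hx.1.trans hx.2)) hx.2

include hP hμ

theorem greenFlux_ne_top (hw : ∀ t, 0 < t → w t ∈ Icc 0 c) (hρ : 0 < ρ) :
    greenFlux P μ (fun t => μ * (μ - q t) * w t + F t (w t)) ρ ≠ ∞ := by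
  have hc : 0 ≤ c := (hw 1 one_pos).1.trans (hw 1 one_pos).2
  refine ne_top_of_le_ne_top ?_ (greenFlux_mono (fun t ht => (hP.pos t ht).le)
    (fun t ht => hF.le_mul ht (hw t ht)) hρ.le)
  rw [hP.greenFlux_const hμ hc hρ]
  exact ENNReal.ofReal_ne_top

theorem greenOperator_ne_top (hw : ∀ t, 0 < t → w t ∈ Icc 0 c) (r : ℝ) :
    greenOperator P μ (fun t => μ * (μ - q t) * w t + F t (w t)) r ≠ ∞ := by
  have hc : 0 ≤ c := (hw 1 one_pos).1.trans (hw 1 one_pos).2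
  rcases le_total r 0 with hr | hr
  · simp [greenOperator_of_nonpos hr]
  · refine ne_top_of_le_ne_top ?_ (greenOperator_mono (fun t ht => (hP.pos t ht).le)
      (fun t ht => hF.le_mul ht (hw t ht)) r)
    rw [hP.greenOperator_const hμ hc hr]
    exact ENNReal.ofReal_ne_top

theorem greenMap_mono {w₁ w₂ : ℝ → ℝ} (hw₁ : ∀ t, 0 < t → w₁ t ∈ Icc 0 c)
    (hw₂ : ∀ t, 0 < t → w₂ t ∈ Icc 0 c) (hw : w₁ ≤ w₂) :
    greenMap q P μ F w₁ ≤ greenMap q P μ F w₂ := fun r =>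
  ENNReal.toReal_mono (hF.greenOperator_ne_top hP hμ hw₂ r) (greenOperator_mono
    (fun t ht => (hP.pos t ht).le)
    (fun t ht => hF.monotoneOn t ht (hw₁ t ht) (hw₂ t ht) (hw t)) r)

theorem greenMap_const_le (hc : 0 ≤ c) (r : ℝ) : greenMap q P μ F (fun _ => c) r ≤ c := by
  rcases le_total r 0 with hr | hr
  · simpa [greenMap, greenOperator_of_nonpos hr] using hc
  · refine ENNReal.toReal_le_of_le_ofReal hc ((greenOperator_mono
      (fun t ht => (hP.pos t ht).le)
      (fun t ht => hF.le_mul ht (right_mem_Icc.2 hc)) r).trans ?_)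
    rw [hP.greenOperator_const hμ hc hr]
    exact ENNReal.ofReal_le_ofReal (sub_le_self _ (by positivity))

theorem le_greenMap_of_constant_flux {η : ℝ} (hη : 0 ≤ η) (hvc : ContinuousOn v (Ici 0))
    (hv₀ : v 0 = 0) (hv : ∀ t, 0 < t → v t ∈ Icc 0 c)
    (hv' : ∀ t, 0 < t → HasDerivAt v (η / P t) t) (hr : 0 ≤ r) : v r ≤ greenMap q P μ F v r := by
  have hle := greenOperator_mono (P := P) (μ := μ) (fun t ht => (hP.pos t ht).le)
    (fun t ht => le_add_of_nonneg_right (a := μ * (μ - q t) * v t) (hF.nonneg t ht _ (hv t ht))) r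
  rw [hP.greenOperator_of_constant_flux hμ hη hvc hv hv' hr, hv₀, mul_zero, sub_zero] at hle
  exact (ENNReal.ofReal_le_iff_le_toReal (hF.greenOperator_ne_top hP hμ hv r)).1 hle

theorem continuousOn_greenMap (hw : ∀ t, 0 < t → w t ∈ Icc 0 c) :
    ContinuousOn (greenMap q P μ F w) (Ici 0) :=
  continuousOn_toReal_greenOperator hP.continuousOn (hF.greenOperator_ne_top hP hμ hw)

theorem hasDerivAt_of_greenMap_eq (hq : ContinuousOn q (Ioi 0))
    (hw : ∀ t, 0 < t → w t ∈ Icc 0 c) (hfix : greenMap q P μ F w = w) :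
    ∃ w' : ℝ → ℝ, ∀ r, 0 < r →
      HasDerivAt w (w' r) r ∧ HasDerivAt w' (-q r * w' r - F r (w r)) r := by
  have hwc : ContinuousOn w (Ioi 0) := by
    rw [← hfix]
    exact (hF.continuousOn_greenMap hP hμ hw).mono Ioi_subset_Ici_self
  have hFw : ContinuousOn (fun t => F t (w t)) (Ioi 0) :=
    hF.continuousOn.comp (f := fun t => (t, w t)) (continuousOn_id.prodMk hwc)
      fun t ht => ⟨ht, hw t ht⟩
  have hnonneg (t : ℝ) (ht : 0 < t) : 0 ≤ μ * (μ - q t) * w t + F t (w t) := by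
    have := hμ.pos
    have := sub_nonneg.2 (hμ.drift_le t ht)
    have := (hw t ht).1
    have := hF.nonneg t ht _ (hw t ht)
    positivity
  obtain ⟨w', hw'⟩ := hP.exists_hasDerivAt_toReal_greenOperator
    (ContinuousOn.fun_add (by fun_prop) hFw) hnonneg
    (fun ρ hρ => hF.greenFlux_ne_top hP hμ hw hρ) (hF.greenOperator_ne_top hP hμ hw)
  refine ⟨w', fun r hr => ⟨?_, (hw' r hr).2.congr_deriv ?_⟩⟩
  · rw [← hfix]
    exact (hw' r hr).1
  · rw [show (greenOperator P μ _ r).toReal = w r from congrFun hfix r]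
    ring

end IsQuasimonotoneSource

namespace IsIntegratingFactor

theorem exists_constant_flux (hP : IsIntegratingFactor q P)
    (hint : IntegrableOn (fun t => (P t)⁻¹) (Ioi 0)) (hc : 0 < c) :
    ∃ v : ℝ → ℝ, ∃ η, 0 ≤ η ∧ ContinuousOn v (Ici 0) ∧ (∀ t ≤ 0, v t = 0) ∧
      (∀ t, 0 < t → v t ∈ Ioc 0 c) ∧ ∀ t, 0 < t → HasDerivAt v (η / P t) t := by
  have hinv (t : ℝ) (ht : 0 < t) : 0 < (P t)⁻¹ := inv_pos.2 (hP.pos t ht)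
  have hint_Ioc (t : ℝ) : IntegrableOn (fun t => (P t)⁻¹) (Ioc 0 t) :=
    hint.mono_set Ioc_subset_Ioi_self
  let V (t : ℝ) : ℝ := ∫ s in Ioc 0 t, (P s)⁻¹
  let I : ℝ := ∫ s in Ioi 0, (P s)⁻¹
  have hV_pos (t : ℝ) (ht : 0 < t) : 0 < V t := by
    rw [show V t = ∫ s in 0..t, (P s)⁻¹ from (intervalIntegral.integral_of_le ht.le).symm]
    exact intervalIntegral.intervalIntegral_pos_of_pos_on
      ((intervalIntegrable_iff_integrableOn_Ioc_of_le ht.le).2 (hint_Ioc t))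
      (fun s hs => hinv s hs.1) ht
  have hV_le (t : ℝ) : V t ≤ I := setIntegral_mono_set hint
    (ae_restrict_of_forall_mem measurableSet_Ioi fun s hs => (hinv s hs).le)
    Ioc_subset_Ioi_self.eventuallyLE
  have hI_pos : 0 < I := (hV_pos 1 one_pos).trans_le (hV_le 1)
  refine ⟨fun t => c / I * V t, c / I, by positivity, ?_, fun t ht => ?_,
    fun t ht => ⟨?_, ?_⟩, fun t ht => ?_⟩
  · exact continuousOn_const.mul (continuousOn_integral_Ioc hint_Ioc)
  · simp [V, Ioc_eq_empty_of_le ht]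
  · have := hV_pos t ht
    positivity
  · calc c / I * V t ≤ c / I * I := by gcongr; exact hV_le t
      _ = c := div_mul_cancel₀ c hI_pos.ne'
  · exact (hasDerivAt_integral_Ioc (hP.continuousOn.inv₀ fun s hs => (hP.pos s hs).ne')
      hint_Ioc ht).const_mul _

theorem exists_pos_solution (hP : IsIntegratingFactor q P) (hμ : IsDecayRate q P μ)
    (hF : IsQuasimonotoneSource q μ F c) (hq : ContinuousOn q (Ioi 0))
    (hint : IntegrableOn (fun t => (P t)⁻¹) (Ioi 0)) (hc : 0 < c) :
    ∃ w w' : ℝ → ℝ, ContinuousOn w (Ici 0) ∧ w 0 = 0 ∧ ∀ r, 0 < r → w r ∈ Ioc 0 c ∧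
      HasDerivAt w (w' r) r ∧ HasDerivAt w' (-q r * w' r - F r (w r)) r := by
  obtain ⟨v, η, hη, hvc, hv₀, hv, hv'⟩ := hP.exists_constant_flux hint hc
  have hmem {w : ℝ → ℝ} (hw : w ∈ Icc v fun _ => c) (t : ℝ) (ht : 0 < t) : w t ∈ Icc 0 c :=
    ⟨(hv t ht).1.le.trans (hw.1 t), hw.2 t⟩
  have hvc_le : v ≤ fun _ => c := fun t => by
    rcases le_or_gt t 0 with ht | ht
    · exact (hv₀ t ht).trans_le hc.le
    · exact (hv t ht).2
  have hvT : v ≤ greenMap q P μ F v := fun t => by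
    rcases le_or_gt t 0 with ht | ht
    · simp [hv₀ t ht, greenMap]
    · exact hF.le_greenMap_of_constant_flux hP hμ hη hvc (hv₀ 0 le_rfl)
        (hmem (left_mem_Icc.2 hvc_le)) hv' ht.le
  obtain ⟨w, hw, hfix⟩ := exists_mem_Icc_eq_of_monotoneOn (T := greenMap q P μ F)
    (fun w₁ hw₁ w₂ hw₂ => hF.greenMap_mono hP hμ (hmem hw₁) (hmem hw₂)) hvc_le hvT
    (hF.greenMap_const_le hP hμ hc.le)
  obtain ⟨w', hw'⟩ := hF.hasDerivAt_of_greenMap_eq hP hμ hq (hmem hw) hfix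
  refine ⟨w, w', hfix ▸ hF.continuousOn_greenMap hP hμ (hmem hw), ?_,
    fun r hr => ⟨⟨(hv r hr).1.trans_le (hw.1 r), hw.2 r⟩, hw' r hr⟩⟩
  rw [← hfix]
  simp [greenMap, greenOperator_of_nonpos le_rfl]

end IsIntegratingFactor

end Nonlinear

end Green

section Profile

theorem monotoneOn_mul_sub_rpow {A c p : ℝ} (hp : 1 ≤ p) (hA : p * c ^ (p - 1) ≤ A) :
    MonotoneOn (fun x : ℝ => A * x - x ^ p) (Icc 0 c) := by
  have hderiv (x : ℝ) : HasDerivAt (fun x : ℝ => A * x - x ^ p) (A * 1 - p * x ^ (p - 1)) x :=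
    ((hasDerivAt_id x).const_mul A).sub (Real.hasDerivAt_rpow_const (Or.inr hp))
  refine monotoneOn_of_deriv_nonneg (convex_Icc 0 c)
    (fun x _ => (hderiv x).continuousAt.continuousWithinAt)
    (fun x _ => (hderiv x).differentiableAt.differentiableWithinAt) fun x hx => ?_
  rw [interior_Icc] at hx
  have hpow : x ^ (p - 1) ≤ c ^ (p - 1) := Real.rpow_le_rpow hx.1.le hx.2.le (by linarith)
  rw [(hderiv x).deriv]
  nlinarith

theorem rpow_le_mul_of_le {c p x : ℝ} (hp : 1 < p) (hx : x ∈ Icc 0 c) :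
    x ^ p ≤ c ^ (p - 1) * x := by
  obtain rfl | hx₀ := hx.1.eq_or_lt
  · simp [Real.zero_rpow (by linarith : p ≠ 0)]
  · calc
      x ^ p = x ^ (p - 1) * x := by rw [← Real.rpow_add_one hx₀.ne', sub_add_cancel]
      _ ≤ c ^ (p - 1) * x := by
        gcongr
        exact hx.2

variable {b lam p μ c : ℝ}

/-- The drift `b/r - 1/(4r²)` of the profile equation
`V'' + (b/r - 1/(4r²)) V' + (lam V - V^p) / (4r²) = 0`. -/
noncomputable def profileDrift (b r : ℝ) : ℝ := b / r - 1 / (4 * r ^ 2)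

/-- The integrating factor `r^b exp (1/(4r))` of `profileDrift b`. -/
noncomputable def profileWeight (b r : ℝ) : ℝ := r ^ b * Real.exp (1 / (4 * r))

/-- The source `(lam V - V^p) / (4r²)` of the profile equation; it vanishes at the constant
`lam^(1/(p-1))`, the profile of the stationary solution. -/
noncomputable def profileSource (lam p r x : ℝ) : ℝ := (lam * x - x ^ p) / (4 * r ^ 2)

theorem continuousOn_profileDrift (b : ℝ) : ContinuousOn (profileDrift b) (Ioi 0) := by
  unfold profileDrift
  have hne (r : ℝ) (hr : r ∈ Ioi 0) : r ≠ 0 := (mem_Ioi.1 hr).ne'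
  exact ContinuousOn.sub (continuousOn_const.div continuousOn_id hne)
    (continuousOn_const.div (by fun_prop) fun r hr => by have := hne r hr; positivity)

theorem isIntegratingFactor_profileWeight (b : ℝ) :
    IsIntegratingFactor (profileDrift b) (profileWeight b) where
  pos r hr := by unfold profileWeight; positivity
  hasDerivAt r hr := by
    have hinv : HasDerivAt (fun r : ℝ => 1 / (4 * r)) (-4 / (4 * r) ^ 2) r := by
      simpa using (hasDerivAt_const r (1 : ℝ)).fun_div ((hasDerivAt_id r).const_mul 4)
        (by positivity)
    refine ((Real.hasDerivAt_rpow_const (Or.inl hr.ne')).mul hinv.exp).congr_deriv ?_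
    rw [profileDrift, profileWeight, Real.rpow_sub_one hr.ne']
    field_simp
    ring

theorem isDecayRate_profileWeight (hμ : 0 < μ) (hb : b ^ 2 ≤ μ) :
    IsDecayRate (profileDrift b) (profileWeight b) μ where
  pos := hμ
  drift_le r hr := by
    have hsq : b ^ 2 - profileDrift b r = (b - 1 / (2 * r)) ^ 2 := by
      unfold profileDrift
      field_simp
      ring
    nlinarith [sq_nonneg (b - 1 / (2 * r))]
  tendsto := by
    have hexp : Tendsto (fun r : ℝ => Real.exp (1 / (4 * r))) atTop (𝓝 1) := by
      have := (tendsto_const_nhds (x := (1 : ℝ))).div_atTop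
        (tendsto_id.const_mul_atTop (by norm_num : (0 : ℝ) < 4))
      simpa [Function.comp_def] using (Real.continuous_exp.tendsto 0).comp this
    have := (tendsto_rpow_mul_exp_neg_mul_atTop_nhds_zero b μ hμ).mul hexp
    rw [zero_mul] at this
    exact this.congr fun r => mul_right_comm _ _ _

theorem integrableOn_inv_profileWeight (hb : 1 < b) :
    IntegrableOn (fun r => (profileWeight b r)⁻¹) (Ioi 0) := by
  have hint := (integrableOn_Ioi_comp_rpow_iff'
    (fun y => y ^ (b - 2) * Real.exp (-(1 / 4) * y ^ (1 : ℝ))) (by norm_num : (-1 : ℝ) ≠ 0)).2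
      (integrableOn_rpow_mul_exp_neg_mul_rpow (by linarith) one_pos (by norm_num))
  refine hint.congr_fun (fun r hr => ?_) measurableSet_Ioi
  have hr₀ : 0 < r := hr
  have hpow : r ^ ((-1 : ℝ) - 1) * (r ^ (-1 : ℝ)) ^ (b - 2) = (r ^ b)⁻¹ := by
    rw [← Real.rpow_mul hr₀.le, ← Real.rpow_add hr₀, ← Real.rpow_neg hr₀.le]
    ring_nf
  have hexp : -(1 / 4) * (r ^ (-1 : ℝ)) ^ (1 : ℝ) = -(1 / (4 * r)) := by
    rw [Real.rpow_one, Real.rpow_neg_one]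
    ring
  simp only [smul_eq_mul, profileWeight]
  rw [← mul_assoc, hpow, hexp, Real.exp_neg, mul_inv]

theorem profileSource_of_rpow_eq (hc : 0 < c) (hcp : c ^ (p - 1) = lam) (r : ℝ) :
    profileSource lam p r c = 0 := by
  have : lam * c - c ^ p = 0 := by
    rw [← hcp, ← Real.rpow_add_one hc.ne', sub_add_cancel, sub_self]
  rw [profileSource, this, zero_div]

theorem isQuasimonotoneSource_profileSource (hp : 1 < p) (hc : 0 < c) (hcp : c ^ (p - 1) = lam)
    (hμ : b ^ 2 + p * lam ≤ μ) :
    IsQuasimonotoneSource (profileDrift b) μ (profileSource lam p) c where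
  continuousOn := by
    refine ContinuousOn.div (ContinuousOn.sub (by fun_prop) ?_) (by fun_prop) fun z hz => ?_
    · exact continuousOn_snd.rpow_const fun _ _ => Or.inr (by linarith)
    · have : 0 < z.1 := hz.1
      positivity
  nonneg r hr x hx := by
    have := rpow_le_mul_of_le hp hx
    rw [hcp] at this
    exact div_nonneg (by linarith) (by positivity)
  eq_zero r _ := profileSource_of_rpow_eq hc hcp r
  monotoneOn r hr := by
    have hA : p * c ^ (p - 1) ≤ 4 * r ^ 2 * (μ * (μ - profileDrift b r)) + lam := by
      have hsq : 4 * r ^ 2 * (μ * (μ - profileDrift b r)) = (2 * μ * r - b) ^ 2 + μ - b ^ 2 := by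
        unfold profileDrift
        field_simp
        ring
      have : 0 < lam := hcp ▸ Real.rpow_pos_of_pos hc _
      rw [hsq, hcp]
      nlinarith [sq_nonneg (2 * μ * r - b)]
    have hform (x : ℝ) : μ * (μ - profileDrift b r) * x + profileSource lam p r x =
        ((4 * r ^ 2 * (μ * (μ - profileDrift b r)) + lam) * x - x ^ p) / (4 * r ^ 2) := by
      unfold profileSource
      field_simp
      ring
    intro x hx y hy hxy
    simp only [hform]
    exact div_le_div_of_nonneg_right (monotoneOn_mul_sub_rpow hp.le hA hx hy hxy) (by positivity)

theorem exists_isSelfSimilarProfile (hb : 1 < b) (hlam : 0 < lam) (hp : 1 < p) :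
    ∃ V V' : ℝ → ℝ, IsSelfSimilarProfile b lam p V V' ∧ V 0 = 0 := by
  have hc : 0 < lam ^ (p - 1)⁻¹ := by positivity
  have hcp : (lam ^ (p - 1)⁻¹) ^ (p - 1) = lam := Real.rpow_inv_rpow hlam.le (by linarith)
  have hμ : 0 < p * lam := by positivity
  obtain ⟨V, V', hVc, hV₀, hV⟩ := (isIntegratingFactor_profileWeight b).exists_pos_solution
    (isDecayRate_profileWeight (μ := b ^ 2 + p * lam) (by positivity) (by linarith))
    (isQuasimonotoneSource_profileSource hp hc hcp le_rfl) (continuousOn_profileDrift b)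
    (integrableOn_inv_profileWeight hb) hc
  refine ⟨V, V', ⟨hVc, fun r hr => (hV r hr).1.1, fun r hr => (hV r hr).2.1,
    fun r hr => (hV r hr).2.2.congr_deriv ?_⟩, hV₀⟩
  unfold profileDrift profileSource
  field_simp
  ring

end Profile

theorem nonuniqueness_of_punctured_cauchy_problem_general (n : ℕ) (p : ℝ) (hp : 1 < p)
    (hpn : (p - 1) * ((n : ℝ) - 2) < 2) :
    ∃ u : EuclideanSpace ℝ (Fin n) → ℝ → ℝ, IsClassicalSolution n p (fun _ => 0) u ∧
      ∀ x ≠ 0, ∀ t, 0 < t → 0 < u x t := by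
  set a := (p - 1)⁻¹
  have ha : 0 < a := inv_pos.2 (sub_pos.2 hp)
  have hap : a * (p - 1) = 1 := inv_mul_cancel₀ (sub_pos.2 hp).ne'
  have hlam : 0 < 2 * a + 2 - n := by nlinarith
  obtain ⟨V, V', hV, hV₀⟩ := exists_isSelfSimilarProfile (b := 2 * a + 2 - n / 2)
    (lam := 2 * a * (2 * a + 2 - n)) (by linarith) (by positivity) hp
  refine ⟨selfSimilar a V, ?_, fun x hx t ht => mul_pos (by positivity) (hV.pos _ (by positivity))⟩
  simpa [selfSimilar, hV₀] using hV.isClassicalSolution hap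

/-- if `n ≥ 3` and `1 < p < n/(n-2)`, there is a nontrivial classical
solution of (P) with vanishing initial data. -/
theorem nonuniqueness_of_punctured_cauchy_problem
    (n : ℕ) (hn : 3 ≤ n) (p : ℝ) (hp : 1 < p) (hpn : p < (n : ℝ) / ((n : ℝ) - 2)) :
    ∃ u : EuclideanSpace ℝ (Fin n) → ℝ → ℝ,
      IsClassicalSolution n p (fun _ => 0) u ∧
      ∃ x : EuclideanSpace ℝ (Fin n), x ≠ 0 ∧ ∃ t : ℝ, 0 ≤ t ∧ u x t ≠ 0 := by
  have hn2 : (0 : ℝ) < n - 2 := by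
    have : (3 : ℝ) ≤ n := by exact_mod_cast hn
    linarith
  have hpn' := (lt_div_iff₀ hn2).1 hpn
  obtain ⟨u, hu, hpos⟩ := nonuniqueness_of_punctured_cauchy_problem_general n p hp (by linarith)
  have he : EuclideanSpace.single (⟨0, by omega⟩ : Fin n) (1 : ℝ) ≠ 0 := by simp
  exact ⟨u, hu, _, he, 1, zero_le_one, (hpos _ he 1 one_pos).ne'⟩
end

section
/- Let n ≥ 3 be an integer and let p ≥ n/(n−2). Then for every continuous g ≥ 0 on ℝⁿ∖{0}, the classical solution of the Cauchy problem (P) is unique: if u₁ and u₂ are both classical solutions of (P) with the same initial data g, then u₁ = u₂ on (ℝⁿ∖{0}) × [0,∞). -/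
open scoped BigOperators

/-!
The difference `w = u₁ - u₂` of two solutions satisfies `w_t ≤ Δw - w^p` wherever it is positive,
because `a^p + b^p ≤ (a + b)^p`. By the maximum principle, `w` lies below every stationary
supersolution on an annulus that is infinite on the boundary, so it is enough to find such barriers
on annuli exhausting `ℝⁿ∖{0}` which tend to `0` at each fixed point.

Put `γ = 1 / (p - 1)`. In the Emden–Fowler variables `s = log |x|`, `v(x) = |x|^(-2γ) H(s)`, the
inequality `Δv ≤ v^p` becomes `H'' + (n - 2 - 4γ) H' - 2γ(n - 2 - 2γ) H ≤ H^p`. The condition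
`p ≥ n / (n - 2)` says exactly that `2γ ≤ n - 2`, so the zero-order term may be dropped. What
remains is implied by `H'' + C|H'| ≤ H^p`, which is invariant under translations and reflections
and, since powers are superadditive, stable under sums. Hence if `h` satisfies it on `(0,∞)`, is
infinite at `0` and vanishes at infinity, then `h(k + s) + h(k - s)` gives a barrier on `|s| < k`
that tends to `0` as `k → ∞`.
-/

open Filter Set Topology InnerProductSpace
open scoped Gradient Laplacian

section SecondDerivatives

variable {E : Type*} [NormedAddCommGroup E] [NormedSpace ℝ E] {f : E → ℝ} {x : E}

theorem iteratedFDeriv_two_eq_iteratedDeriv_line (hf : ContDiffAt ℝ 2 f x) (e : E) :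
    iteratedFDeriv ℝ 2 f x ![e, e] = iteratedDeriv 2 (fun r : ℝ => f (x + r • e)) 0 := by
  have hline (s : ℝ) : HasDerivAt (fun r : ℝ => x + r • e) e s := by
    simpa using ((hasDerivAt_id s).smul_const e).const_add x
  have hline_tendsto : Tendsto (fun r : ℝ => x + r • e) (𝓝 0) (𝓝 x) := by
    simpa [ContinuousAt] using (hline 0).continuousAt
  have hderiv : deriv (fun r : ℝ => f (x + r • e)) =ᶠ[𝓝 0] fun r => fderiv ℝ f (x + r • e) e := by
    filter_upwards [hline_tendsto.eventually (hf.eventually (by simp))] with s hs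
    exact ((hs.differentiableAt (by simp)).hasFDerivAt.comp_hasDerivAt s (hline s)).deriv
  have hf' : DifferentiableAt ℝ (fderiv ℝ f) x :=
    (hf.fderiv_right (m := 1) (by norm_num)).differentiableAt (by simp)
  have hf'e : HasFDerivAt (fun y => fderiv ℝ f y e) (fderiv ℝ (fun y => fderiv ℝ f y e) x)
      (x + (0 : ℝ) • e) := by
    simpa using (hf'.clm_apply (differentiableAt_const e)).hasFDerivAt
  have hderiv₂ : HasDerivAt ((fun y => fderiv ℝ f y e) ∘ fun r : ℝ => x + r • e)
      (fderiv ℝ (fun y => fderiv ℝ f y e) x e) 0 :=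
    hf'e.comp_hasDerivAt (0 : ℝ) (hline 0)
  rw [iteratedDeriv_succ, iteratedDeriv_one, hderiv.deriv_eq]
  refine Eq.symm (hderiv₂.deriv.trans ?_)
  simp [iteratedFDeriv_two_apply, fderiv_clm_apply hf' (differentiableAt_const e)]

theorem iteratedDeriv_two_nonpos_of_isLocalMax {φ : ℝ → ℝ} {s : ℝ} (hφ : ContinuousAt φ s)
    (hmax : IsLocalMax φ s) : iteratedDeriv 2 φ s ≤ 0 := by
  by_contra! hpos
  rw [iteratedDeriv_succ, iteratedDeriv_one] at hpos
  have hmin : IsLocalMin φ s := isLocalMin_of_deriv_deriv_pos hpos hmax.deriv_eq_zero hφ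
  have hconst : φ =ᶠ[𝓝 s] fun _ => φ s := by
    filter_upwards [hmax, hmin] with r h₁ h₂ using le_antisymm h₁ h₂
  have hderiv : deriv φ =ᶠ[𝓝 s] fun _ => 0 := by simpa using hconst.deriv
  exact hpos.ne' (by simpa using hderiv.deriv_eq)

theorem deriv_nonneg_of_isMaxOn_Icc {φ : ℝ → ℝ} {a t : ℝ} (hat : a < t)
    (hφ : DifferentiableAt ℝ φ t) (hmax : IsMaxOn φ (Icc a t) t) : 0 ≤ deriv φ t := by
  have hcone : (a - t) ∈ posTangentConeAt (Icc a t) t :=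
    sub_mem_posTangentConeAt_of_segment_subset (by rw [segment_symm, segment_eq_Icc hat.le])
  have hle := hmax.localize.hasFDerivWithinAt_nonpos hφ.hasDerivAt.hasFDerivAt.hasFDerivWithinAt
    hcone
  simp only [ContinuousLinearMap.toSpanSingleton_apply, smul_eq_mul] at hle
  exact nonneg_of_mul_nonpos_right hle (sub_neg.2 hat)

end SecondDerivatives

theorem hasGradientAt_norm_sq {E : Type*} [NormedAddCommGroup E] [InnerProductSpace ℝ E]
    [CompleteSpace E] (x : E) : HasGradientAt (fun y : E => ‖y‖ ^ 2) ((2 : ℝ) • x) x := by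
  refine hasGradientAt_iff_hasFDerivAt.2
    ((hasStrictFDerivAt_norm_sq x).hasFDerivAt.congr_fderiv ?_)
  ext y
  simp

section Laplacian

variable {E : Type*} [NormedAddCommGroup E] [InnerProductSpace ℝ E] [FiniteDimensional ℝ E]
  {f : E → ℝ} {x : E}

theorem laplacian_eq_sum_iteratedDeriv_line {ι : Type*} [Fintype ι] (b : OrthonormalBasis ι ℝ E)
    (hf : ContDiffAt ℝ 2 f x) :
    Δ f x = ∑ i, iteratedDeriv 2 (fun r : ℝ => f (x + r • b i)) 0 := by
  simp only [laplacian_eq_iteratedFDeriv_orthonormalBasis f b,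
    iteratedFDeriv_two_eq_iteratedDeriv_line hf]

theorem laplacian_nonpos_of_isLocalMax (hf : ContDiffAt ℝ 2 f x) (hmax : IsLocalMax f x) :
    Δ f x ≤ 0 := by
  rw [laplacian_eq_sum_iteratedDeriv_line (stdOrthonormalBasis ℝ E) hf]
  refine Finset.sum_nonpos fun i _ => ?_
  have hline : ContinuousAt (fun r : ℝ => x + r • stdOrthonormalBasis ℝ E i) 0 := by fun_prop
  refine iteratedDeriv_two_nonpos_of_isLocalMax (hf.continuousAt.comp_of_eq hline (by simp)) ?_
  rw [ContinuousAt, zero_smul, add_zero] at hline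
  simpa [IsLocalMax, IsMaxFilter] using hline.eventually hmax

theorem laplacian_comp {F : ℝ → ℝ} (hF : ContDiffAt ℝ 2 F (f x)) (hf : ContDiffAt ℝ 2 f x) :
    Δ (F ∘ f) x = iteratedDeriv 2 F (f x) * ‖∇ f x‖ ^ 2 + deriv F (f x) * Δ f x := by
  set b := stdOrthonormalBasis ℝ E
  have hline (i) : ContDiff ℝ 2 fun r : ℝ => x + r • b i := by fun_prop
  have hderiv (i) : deriv (fun r : ℝ => f (x + r • b i)) 0 = ⟪∇ f x, b i⟫_ℝ := by
    rw [inner_gradient_left]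
    exact (hf.differentiableAt (by simp)).lineDeriv_eq_fderiv
  rw [laplacian_eq_sum_iteratedDeriv_line b (hF.comp x hf),
    laplacian_eq_sum_iteratedDeriv_line b hf, ← b.sum_sq_inner_left, Finset.mul_sum, Finset.mul_sum,
    ← Finset.sum_add_distrib]
  refine Finset.sum_congr rfl fun i _ => ?_
  have hfline : ContDiffAt ℝ 2 (fun r : ℝ => f (x + r • b i)) 0 :=
    ContDiffAt.comp 0 (by simpa using hf) (hline i).contDiffAt
  have := iteratedDeriv_comp_two (x := (0 : ℝ)) (g := F) (by simpa using hF) hfline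
  simpa [Function.comp_def, hderiv] using this

theorem laplacian_norm_sq (x : E) : Δ (fun y : E => ‖y‖ ^ 2) x = 2 * Module.finrank ℝ E := by
  set b := stdOrthonormalBasis ℝ E
  have hline (i) : iteratedDeriv 2 (fun r : ℝ => ‖x + r • b i‖ ^ 2) 0 = 2 := by
    have : (fun r : ℝ => ‖x + r • b i‖ ^ 2) = fun r => ‖x‖ ^ 2 + 2 * ⟪x, b i⟫_ℝ * r + r ^ 2 := by
      ext r
      rw [norm_add_sq_real, inner_smul_right, norm_smul, b.norm_eq_one, mul_one, Real.norm_eq_abs,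
        sq_abs]
      ring
    have hderiv : deriv (fun r => ‖x‖ ^ 2 + 2 * ⟪x, b i⟫_ℝ * r + r ^ 2) =
        fun r => 2 * ⟪x, b i⟫_ℝ + 2 * r := by
      ext r
      exact ((((hasDerivAt_id r).const_mul _).const_add _).add (hasDerivAt_pow 2 r)).deriv.trans
        (by simp)
    rw [this, iteratedDeriv_succ, iteratedDeriv_one, hderiv]
    simp
  rw [laplacian_eq_sum_iteratedDeriv_line b (contDiff_norm_sq ℝ).contDiffAt]
  simp [hline, mul_comm]

theorem laplacian_comp_log_norm {F : ℝ → ℝ} (hx : x ≠ 0) (hF : ContDiffAt ℝ 2 F (Real.log ‖x‖)) :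
    Δ (fun y : E => F (Real.log ‖y‖)) x =
      (iteratedDeriv 2 F (Real.log ‖x‖) + (Module.finrank ℝ E - 2) * deriv F (Real.log ‖x‖)) /
        ‖x‖ ^ 2 := by
  set L : ℝ → ℝ := fun q => 2⁻¹ * Real.log q with hL_def
  have hlog (y : E) : Real.log ‖y‖ = L (‖y‖ ^ 2) := by
    simp [hL_def]
  have hq : ‖x‖ ^ 2 ≠ 0 := by simpa using hx
  have hL : ContDiffAt ℝ 2 L (‖x‖ ^ 2) := contDiffAt_const.mul (Real.contDiffAt_log.2 hq)
  have hderiv : deriv L = fun q => 2⁻¹ * q⁻¹ := by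
    ext q
    simp [hL_def]
  have hderiv₂ : iteratedDeriv 2 L (‖x‖ ^ 2) = -2⁻¹ * ((‖x‖ ^ 2) ^ 2)⁻¹ := by
    rw [iteratedDeriv_succ, iteratedDeriv_one, hderiv]
    simp
  simp only [hlog] at hF ⊢
  refine (laplacian_comp (F := F ∘ L) (f := fun y : E => ‖y‖ ^ 2) (hF.comp (‖x‖ ^ 2) hL)
    (contDiff_norm_sq ℝ).contDiffAt).trans ?_
  rw [iteratedDeriv_comp_two hF hL, deriv_comp _ (hF.differentiableAt (by simp))
    (hL.differentiableAt (by simp)), hderiv, hderiv₂,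
    (hasGradientAt_norm_sq x).gradient, norm_smul, Real.norm_two, laplacian_norm_sq]
  field_simp
  ring

end Laplacian

theorem laplacian_eq_innerProductSpace_laplacian {n : ℕ} {f : EuclideanSpace ℝ (Fin n) → ℝ}
    {x : EuclideanSpace ℝ (Fin n)} (hf : ContDiffAt ℝ 2 f x) : laplacian f x = Δ f x := by
  have hf' : DifferentiableAt ℝ (fderiv ℝ f) x :=
    (hf.fderiv_right (m := 1) (by norm_num)).differentiableAt (by simp)
  rw [laplacian_eq_iteratedFDeriv_orthonormalBasis f (EuclideanSpace.basisFun (Fin n) ℝ)]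
  refine Finset.sum_congr rfl fun i _ => ?_
  simp [iteratedFDeriv_two_apply, fderiv_clm_apply hf' (differentiableAt_const _)]

section Blowup

variable {X : Type*} [PseudoMetricSpace X] [ProperSpace X] {Ω : Set X} {v : X → ℝ}

theorem isCompact_sublevel_of_tendsto_atTop_frontier (hΩ : Bornology.IsBounded Ω)
    (hv : ContinuousOn v Ω) (hblowup : ∀ y ∈ frontier Ω, Tendsto v (𝓝[Ω] y) atTop) (M : ℝ) :
    IsCompact {x ∈ Ω | v x ≤ M} := by
  refine Metric.isCompact_of_isClosed_isBounded ?_ (hΩ.subset (sep_subset _ _))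
  refine isClosed_of_closure_subset fun y hy => ?_
  have hclosure : y ∈ closure Ω := closure_mono (sep_subset _ _) hy
  have hfreq : ∃ᶠ x in 𝓝[Ω] y, v x ≤ M := by
    rw [mem_closure_iff_frequently] at hy
    exact frequently_nhdsWithin_iff.2 (hy.mono fun x hx => ⟨hx.2, hx.1⟩)
  have hyΩ : y ∈ Ω := by
    by_contra hyΩ
    have hlarge := (hblowup y ⟨hclosure, fun h => hyΩ (interior_subset h)⟩).eventually_gt_atTop M
    obtain ⟨x, hle, hlt⟩ := (hfreq.and_eventually hlarge).exists
    exact hle.not_gt hlt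
  exact ⟨hyΩ, isClosed_Iic.mem_of_frequently_of_tendsto hfreq (hv y hyΩ)⟩

theorem exists_forall_sub_le_of_tendsto_atTop_frontier {w : X → ℝ → ℝ} {T : ℝ}
    (hΩ : Bornology.IsBounded Ω) (hv : ContinuousOn v Ω)
    (hblowup : ∀ y ∈ frontier Ω, Tendsto v (𝓝[Ω] y) atTop)
    (hw : ContinuousOn (fun q : X × ℝ => w q.1 q.2) (closure Ω ×ˢ Icc 0 T))
    {x₀ : X} (hx₀ : x₀ ∈ Ω) {t₀ : ℝ} (ht₀ : t₀ ∈ Icc 0 T) (hlt : v x₀ < w x₀ t₀) :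
    ∃ x ∈ Ω, ∃ t ∈ Icc 0 T, v x < w x t ∧
      ∀ y ∈ Ω, ∀ s ∈ Icc 0 T, w y s - v y ≤ w x t - v x := by
  obtain ⟨M, hM⟩ := (hΩ.isCompact_closure.prod isCompact_Icc).bddAbove_image hw
  replace hM (y) (hy : y ∈ Ω) (s) (hs : s ∈ Icc 0 T) : w y s ≤ M :=
    hM ⟨(y, s), ⟨subset_closure hy, hs⟩, rfl⟩
  set K : Set X := {x ∈ Ω | v x ≤ M}
  have hK : IsCompact K := isCompact_sublevel_of_tendsto_atTop_frontier hΩ hv hblowup M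
  have hx₀K : x₀ ∈ K := ⟨hx₀, hlt.le.trans (hM x₀ hx₀ t₀ ht₀)⟩
  have hcont : ContinuousOn (fun q : X × ℝ => w q.1 q.2 - v q.1) (K ×ˢ Icc 0 T) :=
    (hw.mono (prod_mono_left ((sep_subset _ _).trans subset_closure))).sub
      (hv.comp continuousOn_fst fun q hq => hq.1.1)
  obtain ⟨⟨x, t⟩, ⟨hxK, ht⟩, hmax⟩ :=
    (hK.prod isCompact_Icc).exists_isMaxOn ⟨(x₀, t₀), hx₀K, ht₀⟩ hcont
  replace hmax (y) (hy : y ∈ K) (s) (hs : s ∈ Icc 0 T) : w y s - v y ≤ w x t - v x :=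
    hmax (a := (y, s)) ⟨hy, hs⟩
  have hpos : 0 < w x t - v x := (sub_pos.2 hlt).trans_le (hmax x₀ hx₀K t₀ ht₀)
  refine ⟨x, hxK.1, t, ht, sub_pos.1 hpos, fun y hy s hs => ?_⟩
  rcases le_or_gt (v y) M with hle | hgt
  · exact hmax y ⟨hy, hle⟩ s hs
  · linarith [hM y hy s hs]

end Blowup

section Barrier

variable {E : Type*} [NormedAddCommGroup E] [InnerProductSpace ℝ E] [FiniteDimensional ℝ E]

/-- `w` is continuous on `U × [0,∞)`, regular for `t > 0`, satisfies `w_t ≤ Δw - w^p` wherever it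
is positive, and starts from nonpositive data. Nothing is asked where `w ≤ 0`, so that differences
of solutions qualify. -/
structure IsSubsolution (p : ℝ) (U : Set E) (w : E → ℝ → ℝ) : Prop where
  continuousOn : ContinuousOn (fun q : E × ℝ => w q.1 q.2) (U ×ˢ Ici 0)
  contDiffAt_space : ∀ x ∈ U, ∀ t, 0 < t → ContDiffAt ℝ 2 (fun y => w y t) x
  differentiableAt_time : ∀ x ∈ U, ∀ t, 0 < t → DifferentiableAt ℝ (w x) t
  deriv_le : ∀ x ∈ U, ∀ t, 0 < t → 0 < w x t → deriv (w x) t ≤ Δ (fun y => w y t) x - w x t ^ p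
  initial_nonpos : ∀ x ∈ U, w x 0 ≤ 0

/-- A positive stationary supersolution of `v_t = Δv - v^p` in `Ω` that blows up at the boundary;
the barrier in the comparison argument. -/
structure IsLargeSupersolution (p : ℝ) (Ω : Set E) (v : E → ℝ) : Prop where
  pos : ∀ x ∈ Ω, 0 < v x
  contDiffAt : ∀ x ∈ Ω, ContDiffAt ℝ 2 v x
  laplacian_le : ∀ x ∈ Ω, Δ v x ≤ v x ^ p
  tendsto_frontier : ∀ y ∈ frontier Ω, Tendsto v (𝓝[Ω] y) atTop

theorem IsSubsolution.le_of_isLargeSupersolution {p : ℝ} {U Ω : Set E} {w : E → ℝ → ℝ}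
    {v : E → ℝ} (hw : IsSubsolution p U w) (hv : IsLargeSupersolution p Ω v) (hp : 0 < p)
    (hΩ : IsOpen Ω) (hbdd : Bornology.IsBounded Ω) (hU : closure Ω ⊆ U) {x : E} (hx : x ∈ Ω)
    {t : ℝ} (ht : 0 ≤ t) : w x t ≤ v x := by
  by_contra! hlt
  obtain ⟨x₁, hx₁, t₁, ht₁, hlt₁, hmax⟩ := exists_forall_sub_le_of_tendsto_atTop_frontier hbdd
    (fun y hy => (hv.contDiffAt y hy).continuousAt.continuousWithinAt) hv.tendsto_frontier
    (hw.continuousOn.mono (prod_mono hU Icc_subset_Ici_self)) hx (right_mem_Icc.2 ht) hlt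
  have hx₁U : x₁ ∈ U := hU (subset_closure hx₁)
  have hvpos : 0 < v x₁ := hv.pos x₁ hx₁
  have ht₁pos : 0 < t₁ := by
    refine ht₁.1.lt_of_ne ?_
    rintro rfl
    exact (hw.initial_nonpos x₁ hx₁U).not_gt (hvpos.trans hlt₁)
  have hwspace := hw.contDiffAt_space x₁ hx₁U t₁ ht₁pos
  have htime : 0 ≤ deriv (w x₁) t₁ := by
    refine deriv_nonneg_of_isMaxOn_Icc ht₁pos (hw.differentiableAt_time x₁ hx₁U t₁ ht₁pos) ?_
    intro s hs
    exact (sub_le_sub_iff_right (v x₁)).1 (hmax x₁ hx₁ s ⟨hs.1, hs.2.trans ht₁.2⟩)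
  have hspace : Δ (fun y => w y t₁) x₁ - Δ v x₁ ≤ 0 := by
    rw [← hwspace.laplacian_sub (hv.contDiffAt x₁ hx₁)]
    refine laplacian_nonpos_of_isLocalMax (hwspace.sub (hv.contDiffAt x₁ hx₁)) ?_
    filter_upwards [hΩ.mem_nhds hx₁] with y hy using hmax y hy t₁ ht₁
  have hrpow : v x₁ ^ p < w x₁ t₁ ^ p := Real.rpow_lt_rpow hvpos.le hlt₁ hp
  linarith [hw.deriv_le x₁ hx₁U t₁ ht₁pos (hvpos.trans hlt₁), hv.laplacian_le x₁ hx₁]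

end Barrier

section Profile

/-- A positive function `h` on `S ⊆ ℝ` with `h'' + C|h'| ≤ h^p` that blows up at the boundary of
`S`. The absolute value makes the notion invariant under reflection. -/
structure IsLargeProfile (p C : ℝ) (S : Set ℝ) (h : ℝ → ℝ) : Prop where
  pos : ∀ s ∈ S, 0 < h s
  contDiffAt : ∀ s ∈ S, ContDiffAt ℝ 2 h s
  iteratedDeriv_two_add_le : ∀ s ∈ S, iteratedDeriv 2 h s + C * |deriv h s| ≤ h s ^ p
  tendsto_frontier : ∀ y ∈ frontier S, Tendsto h (𝓝[S] y) atTop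

namespace IsLargeProfile

variable {p C : ℝ} {S T : Set ℝ} {h k : ℝ → ℝ}

theorem tendsto_frontier_comp (hh : IsLargeProfile p C S h) {φ : ℝ → ℝ} (hφ : Continuous φ) :
    ∀ y ∈ frontier (φ ⁻¹' S), Tendsto (h ∘ φ) (𝓝[φ ⁻¹' S] y) atTop := fun y hy =>
  (hh.tendsto_frontier (φ y) (hφ.frontier_preimage_subset S hy)).comp
    (hφ.continuousWithinAt.tendsto_nhdsWithin (mapsTo_preimage φ S))

theorem comp_const_add (hh : IsLargeProfile p C S h) (c : ℝ) :
    IsLargeProfile p C ((c + ·) ⁻¹' S) (fun s => h (c + s)) where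
  pos s hs := hh.pos (c + s) hs
  contDiffAt s hs := (hh.contDiffAt (c + s) hs).comp s (contDiffAt_const.add contDiffAt_id)
  iteratedDeriv_two_add_le s hs := by
    simpa [iteratedDeriv_comp_const_add, deriv_comp_const_add] using
      hh.iteratedDeriv_two_add_le (c + s) hs
  tendsto_frontier := hh.tendsto_frontier_comp (continuous_const.add continuous_id)

theorem comp_const_sub (hh : IsLargeProfile p C S h) (c : ℝ) :
    IsLargeProfile p C ((c - ·) ⁻¹' S) (fun s => h (c - s)) where
  pos s hs := hh.pos (c - s) hs
  contDiffAt s hs := (hh.contDiffAt (c - s) hs).comp s (contDiffAt_const.sub contDiffAt_id)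
  iteratedDeriv_two_add_le s hs := by
    simpa [iteratedDeriv_comp_const_sub, deriv_comp_const_sub] using
      hh.iteratedDeriv_two_add_le (c - s) hs
  tendsto_frontier := hh.tendsto_frontier_comp (continuous_const.sub continuous_id)

theorem add (hh : IsLargeProfile p C S h) (hk : IsLargeProfile p C T k) (hp : 1 ≤ p)
    (hC : 0 ≤ C) : IsLargeProfile p C (S ∩ T) (fun s => h s + k s) where
  pos s hs := add_pos (hh.pos s hs.1) (hk.pos s hs.2)
  contDiffAt s hs := (hh.contDiffAt s hs.1).add (hk.contDiffAt s hs.2)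
  iteratedDeriv_two_add_le s hs := by
    have hh₂ := hh.contDiffAt s hs.1
    have hk₂ := hk.contDiffAt s hs.2
    rw [iteratedDeriv_fun_add hh₂ hk₂,
      deriv_fun_add (hh₂.differentiableAt (by simp)) (hk₂.differentiableAt (by simp))]
    have habs := mul_le_mul_of_nonneg_left (abs_add_le (deriv h s) (deriv k s)) hC
    have hrpow := Real.add_rpow_le_rpow_add (hh.pos s hs.1).le (hk.pos s hs.2).le hp
    linarith [hh.iteratedDeriv_two_add_le s hs.1, hk.iteratedDeriv_two_add_le s hs.2]
  tendsto_frontier y hy := by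
    rcases frontier_inter_subset S T hy with ⟨hyS, -⟩ | ⟨-, hyT⟩
    · refine tendsto_atTop_mono' _ ?_
        ((hh.tendsto_frontier y hyS).mono_left (nhdsWithin_mono y inter_subset_left))
      filter_upwards [self_mem_nhdsWithin] with s hs using le_add_of_nonneg_right (hk.pos s hs.2).le
    · refine tendsto_atTop_mono' _ ?_
        ((hk.tendsto_frontier y hyT).mono_left (nhdsWithin_mono y inter_subset_right))
      filter_upwards [self_mem_nhdsWithin] with s hs using le_add_of_nonneg_left (hh.pos s hs.1).le

end IsLargeProfile

theorem iteratedDeriv_two_rpow_const (r s : ℝ) :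
    iteratedDeriv 2 (fun x : ℝ => x ^ r) s = r * (r - 1) * s ^ (r - 2) := by
  rw [iteratedDeriv_eq_iterate, Real.iter_deriv_rpow_const]
  simp [descPochhammer_succ_right]

/-- A multiple of `s ^ (-γ) + s ^ (-2γ)`, a profile for the exponent `p = 1 + 1 / γ` on `(0,∞)`
that decays at infinity. In `h ^ p` the power `s ^ (-γ)` absorbs `C|h'|` and the power `s ^ (-2γ)`
absorbs `h''`: the prefactor makes `h ^ (1 / γ)` at least `2γ(2γ + 1 + C)` times both `1 / s` and
`1 / s ^ 2`. -/
noncomputable def decayingProfile (γ C : ℝ) (s : ℝ) : ℝ :=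
  (2 * γ * (2 * γ + 1 + C)) ^ γ * (s ^ (-γ) + s ^ (-(2 * γ)))

section DecayingProfile

variable {γ C s : ℝ}

theorem decayingProfile_pos (hγ : 0 < γ) (hC : 0 ≤ C) (hs : 0 < s) :
    0 < decayingProfile γ C s := by
  unfold decayingProfile
  positivity

theorem contDiffAt_decayingProfile (hs : 0 < s) : ContDiffAt ℝ 2 (decayingProfile γ C) s :=
  contDiffAt_const.mul ((Real.contDiffAt_rpow_const_of_ne hs.ne').add
    (Real.contDiffAt_rpow_const_of_ne hs.ne'))

theorem inv_le_decayingProfile_rpow (hγ : 0 < γ) (hC : 0 ≤ C) (hs : 0 < s) :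
    2 * γ * (2 * γ + 1 + C) * s⁻¹ ≤ decayingProfile γ C s ^ γ⁻¹ := by
  rw [Real.le_rpow_inv_iff_of_pos (by positivity) (decayingProfile_pos hγ hC hs).le hγ,
    Real.mul_rpow (by positivity) (by positivity), Real.inv_rpow hs.le, ← Real.rpow_neg hs.le]
  exact mul_le_mul_of_nonneg_left (le_add_of_nonneg_right (by positivity)) (by positivity)

theorem inv_sq_le_decayingProfile_rpow (hγ : 0 < γ) (hC : 0 ≤ C) (hs : 0 < s) :
    2 * γ * (2 * γ + 1 + C) * (s ^ 2)⁻¹ ≤ decayingProfile γ C s ^ γ⁻¹ := by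
  rw [Real.le_rpow_inv_iff_of_pos (by positivity) (decayingProfile_pos hγ hC hs).le hγ,
    Real.mul_rpow (by positivity) (by positivity), Real.inv_rpow (by positivity),
    ← Real.rpow_natCast_mul hs.le, ← Real.rpow_neg hs.le]
  exact mul_le_mul_of_nonneg_left (le_add_of_nonneg_left (by positivity)) (by positivity)

theorem abs_deriv_decayingProfile_le (hγ : 0 < γ) (hC : 0 ≤ C) (hs : 0 < s) :
    |deriv (decayingProfile γ C) s| ≤ 2 * γ * s⁻¹ * decayingProfile γ C s := by
  set A := (2 * γ * (2 * γ + 1 + C)) ^ γ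
  have : 0 < A := by positivity
  have hderiv : deriv (decayingProfile γ C) s =
      -(γ * s⁻¹ * (A * (s ^ (-γ) + 2 * s ^ (-(2 * γ))))) := by
    refine ((((Real.hasDerivAt_rpow_const (Or.inl hs.ne')).add
      (Real.hasDerivAt_rpow_const (Or.inl hs.ne'))).const_mul A).deriv).trans ?_
    rw [Real.rpow_sub_one hs.ne', Real.rpow_sub_one hs.ne']
    ring
  rw [hderiv, abs_neg, abs_of_nonneg (by positivity)]
  have hle : s ^ (-γ) + 2 * s ^ (-(2 * γ)) ≤ 2 * (s ^ (-γ) + s ^ (-(2 * γ))) := by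
    linarith [Real.rpow_nonneg hs.le (-γ)]
  calc γ * s⁻¹ * (A * (s ^ (-γ) + 2 * s ^ (-(2 * γ))))
      ≤ γ * s⁻¹ * (A * (2 * (s ^ (-γ) + s ^ (-(2 * γ))))) := by gcongr
    _ = 2 * γ * s⁻¹ * decayingProfile γ C s := by rw [decayingProfile]; ring

theorem iteratedDeriv_two_decayingProfile_le (hγ : 0 < γ) (hC : 0 ≤ C) (hs : 0 < s) :
    iteratedDeriv 2 (decayingProfile γ C) s ≤
      2 * γ * (2 * γ + 1) * (s ^ 2)⁻¹ * decayingProfile γ C s := by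
  have hdiff (r : ℝ) : ContDiffAt ℝ 2 (fun x : ℝ => x ^ r) s :=
    Real.contDiffAt_rpow_const_of_ne hs.ne'
  unfold decayingProfile
  rw [iteratedDeriv_const_mul_field, iteratedDeriv_fun_add (hdiff _) (hdiff _),
    iteratedDeriv_two_rpow_const, iteratedDeriv_two_rpow_const]
  set A := (2 * γ * (2 * γ + 1 + C)) ^ γ
  have : 0 < A := by positivity
  have hsub (r : ℝ) : s ^ (r - 2) = (s ^ 2)⁻¹ * s ^ r := by
    rw [Real.rpow_sub hs, Real.rpow_two, div_eq_inv_mul]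
  have hle : γ * (γ + 1) ≤ 2 * γ * (2 * γ + 1) := by nlinarith
  calc A * (-γ * (-γ - 1) * s ^ (-γ - 2) + -(2 * γ) * (-(2 * γ) - 1) * s ^ (-(2 * γ) - 2))
      = A * (s ^ 2)⁻¹ *
          (γ * (γ + 1) * s ^ (-γ) + 2 * γ * (2 * γ + 1) * s ^ (-(2 * γ))) := by
        rw [hsub, hsub]; ring
    _ ≤ A * (s ^ 2)⁻¹ *
          (2 * γ * (2 * γ + 1) * s ^ (-γ) + 2 * γ * (2 * γ + 1) * s ^ (-(2 * γ))) := by gcongr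
    _ = _ := by ring

theorem isLargeProfile_decayingProfile (hγ : 0 < γ) (hC : 0 ≤ C) :
    IsLargeProfile (1 + γ⁻¹) C (Ioi 0) (decayingProfile γ C) where
  pos _ := decayingProfile_pos hγ hC
  contDiffAt _ := contDiffAt_decayingProfile
  iteratedDeriv_two_add_le s (hs : 0 < s) := by
    have hpos := decayingProfile_pos hγ hC hs
    have hD : 0 < 2 * γ * (2 * γ + 1 + C) := by positivity
    set h := decayingProfile γ C s
    set X := h ^ γ⁻¹ / (2 * γ * (2 * γ + 1 + C))
    have hX₁ : s⁻¹ ≤ X := (le_div_iff₀' hD).2 (inv_le_decayingProfile_rpow hγ hC hs)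
    have hX₂ : (s ^ 2)⁻¹ ≤ X := (le_div_iff₀' hD).2 (inv_sq_le_decayingProfile_rpow hγ hC hs)
    calc iteratedDeriv 2 (decayingProfile γ C) s + C * |deriv (decayingProfile γ C) s|
        ≤ 2 * γ * (2 * γ + 1) * (s ^ 2)⁻¹ * h + C * (2 * γ * s⁻¹ * h) :=
          add_le_add (iteratedDeriv_two_decayingProfile_le hγ hC hs)
            (mul_le_mul_of_nonneg_left (abs_deriv_decayingProfile_le hγ hC hs) hC)
      _ ≤ 2 * γ * (2 * γ + 1) * X * h + C * (2 * γ * X * h) := by gcongr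
      _ = h * (2 * γ * (2 * γ + 1 + C) * X) := by ring
      _ = h ^ (1 + γ⁻¹) := by
        rw [mul_div_cancel₀ _ hD.ne', Real.rpow_one_add' hpos.le (by positivity)]
  tendsto_frontier y hy := by
    obtain rfl : y = 0 := by simpa using hy
    refine Tendsto.const_mul_atTop (by positivity) (tendsto_atTop_mono' _ ?_
      (tendsto_rpow_neg_nhdsGT_zero (neg_lt_zero.2 hγ)))
    filter_upwards [self_mem_nhdsWithin] with s (hs : 0 < s)
    exact le_add_of_nonneg_right (by positivity)

theorem tendsto_decayingProfile_atTop (hγ : 0 < γ) :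
    Tendsto (decayingProfile γ C) atTop (𝓝 0) := by
  have h := ((tendsto_rpow_neg_atTop hγ).add
    (tendsto_rpow_neg_atTop (mul_pos two_pos hγ))).const_mul ((2 * γ * (2 * γ + 1 + C)) ^ γ)
  rwa [add_zero, mul_zero] at h

theorem isLargeProfile_decayingProfile_add_reflection (hγ : 0 < γ) (hC : 0 ≤ C) (k : ℝ) :
    IsLargeProfile (1 + γ⁻¹) C (Ioo (-k) k)
      (fun s => decayingProfile γ C (k + s) + decayingProfile γ C (k - s)) := by
  have h := isLargeProfile_decayingProfile hγ hC
  have hIoo : Ioo (-k) k = (k + ·) ⁻¹' Ioi 0 ∩ (k - ·) ⁻¹' Ioi 0 := by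
    ext s
    simp [neg_lt_iff_pos_add']
  rw [hIoo]
  exact (h.comp_const_add k).add (h.comp_const_sub k) (by simpa using hγ.le) hC

end DecayingProfile

end Profile

section EmdenFowler

variable {E : Type*} [NormedAddCommGroup E]

/-- The annulus `{x | exp a < ‖x‖ < exp b}`, parametrised by the range of `log ‖x‖`. -/
def logAnnulus (E : Type*) [NormedAddCommGroup E] (a b : ℝ) : Set E :=
  norm ⁻¹' Ioo (Real.exp a) (Real.exp b)

namespace logAnnulus

variable {a b : ℝ} {x : E}

theorem ne_zero (hx : x ∈ logAnnulus E a b) : x ≠ 0 :=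
  norm_pos_iff.1 ((Real.exp_pos a).trans hx.1)

theorem mem_iff (hx : x ≠ 0) : x ∈ logAnnulus E a b ↔ Real.log ‖x‖ ∈ Ioo a b := by
  have hx' : 0 < ‖x‖ := norm_pos_iff.2 hx
  exact and_congr (Real.lt_log_iff_exp_lt hx').symm (Real.log_lt_iff_lt_exp hx').symm

theorem log_norm_mem (hx : x ∈ logAnnulus E a b) : Real.log ‖x‖ ∈ Ioo a b :=
  (mem_iff (ne_zero hx)).1 hx

theorem isOpen : IsOpen (logAnnulus E a b) :=
  isOpen_Ioo.preimage continuous_norm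

theorem isBounded : Bornology.IsBounded (logAnnulus E a b) :=
  isBounded_iff_forall_norm_le.2 ⟨Real.exp b, fun _ hx => hx.2.le⟩

theorem exp_le_norm_of_mem_closure (hx : x ∈ closure (logAnnulus E a b)) : Real.exp a ≤ ‖x‖ :=
  closure_minimal (fun _ hy => hy.1.le) (isClosed_Ici.preimage continuous_norm) hx

theorem closure_subset_compl_zero : closure (logAnnulus E a b) ⊆ {0}ᶜ := fun _ hx =>
  norm_pos_iff.1 ((Real.exp_pos a).trans_le (exp_le_norm_of_mem_closure hx))

theorem log_norm_mem_frontier (hab : a < b) (hx : x ∈ frontier (logAnnulus E a b)) :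
    Real.log ‖x‖ ∈ frontier (Ioo a b) := by
  have h : ‖x‖ ∈ frontier (Ioo (Real.exp a) (Real.exp b)) :=
    continuous_norm.frontier_preimage_subset _ hx
  rw [frontier_Ioo (Real.exp_lt_exp.2 hab)] at h
  rw [frontier_Ioo hab]
  rcases h with (h : ‖x‖ = _) | (h : ‖x‖ = _) <;> simp [h]

end logAnnulus

theorem deriv_exp_mul {H : ℝ → ℝ} {m s : ℝ} (hH : DifferentiableAt ℝ H s) :
    deriv (fun r => Real.exp (m * r) * H r) s = Real.exp (m * s) * (m * H s + deriv H s) := by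
  have hexp : HasDerivAt (fun r => Real.exp (m * r)) (Real.exp (m * s) * (m * 1)) s :=
    ((hasDerivAt_id s).const_mul m).exp
  exact (hexp.mul hH.hasDerivAt).deriv.trans (by ring)

theorem iteratedDeriv_two_exp_mul {H : ℝ → ℝ} {m s : ℝ} (hH : ContDiffAt ℝ 2 H s) :
    iteratedDeriv 2 (fun r => Real.exp (m * r) * H r) s =
      Real.exp (m * s) * (m ^ 2 * H s + 2 * m * deriv H s + iteratedDeriv 2 H s) := by
  have hexp : ContDiff ℝ 2 fun r => Real.exp (m * r) := by fun_prop
  rw [iteratedDeriv_fun_mul hexp.contDiffAt hH]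
  simp [Finset.sum_range_succ, iteratedDeriv_one, iteratedDeriv_exp_const_mul]
  ring

variable [InnerProductSpace ℝ E] [FiniteDimensional ℝ E]

theorem laplacian_exp_mul_comp_log_norm {H : ℝ → ℝ} {m : ℝ} {x : E} (hx : x ≠ 0)
    (hH : ContDiffAt ℝ 2 H (Real.log ‖x‖)) :
    Δ (fun y : E => Real.exp (m * Real.log ‖y‖) * H (Real.log ‖y‖)) x =
      Real.exp (m * Real.log ‖x‖) / ‖x‖ ^ 2 *
        (iteratedDeriv 2 H (Real.log ‖x‖) +
          (Module.finrank ℝ E - 2 + 2 * m) * deriv H (Real.log ‖x‖) +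
          m * (m + Module.finrank ℝ E - 2) * H (Real.log ‖x‖)) := by
  have hexp : ContDiff ℝ 2 fun r => Real.exp (m * r) := by fun_prop
  rw [laplacian_comp_log_norm (F := fun s => Real.exp (m * s) * H s) hx (hexp.contDiffAt.mul hH),
    deriv_exp_mul (hH.differentiableAt (by simp)), iteratedDeriv_two_exp_mul hH]
  ring

theorem IsLargeProfile.laplacian_exp_mul_comp_log_norm_le {γ C : ℝ} {S : Set ℝ} {H : ℝ → ℝ}
    (hH : IsLargeProfile (1 + γ⁻¹) C S H) (hγ : 0 < γ) (hdim : 2 * γ ≤ Module.finrank ℝ E - 2)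
    (hC : |Module.finrank ℝ E - 2 - 4 * γ| ≤ C) {x : E} (hx : x ≠ 0) (hs : Real.log ‖x‖ ∈ S) :
    Δ (fun y : E => Real.exp (-(2 * γ) * Real.log ‖y‖) * H (Real.log ‖y‖)) x ≤
      (Real.exp (-(2 * γ) * Real.log ‖x‖) * H (Real.log ‖x‖)) ^ (1 + γ⁻¹) := by
  rw [laplacian_exp_mul_comp_log_norm hx (hH.contDiffAt _ hs)]
  have hnorm : ‖x‖ = Real.exp (Real.log ‖x‖) := (Real.exp_log (norm_pos_iff.2 hx)).symm
  set s := Real.log ‖x‖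
  have hpos := hH.pos s hs
  have hweight : Real.exp (-(2 * γ) * s) / ‖x‖ ^ 2 = Real.exp (-(2 * γ) * s) ^ (1 + γ⁻¹) := by
    rw [hnorm, ← Real.exp_nat_mul, ← Real.exp_sub, ← Real.exp_mul]
    congr 1
    field_simp
    push_cast
    ring
  have hzero : -(2 * γ) * (-(2 * γ) + Module.finrank ℝ E - 2) * H s ≤ 0 :=
    mul_nonpos_of_nonpos_of_nonneg
      (mul_nonpos_of_nonpos_of_nonneg (by linarith) (by linarith)) hpos.le
  have hfirst : (Module.finrank ℝ E - 2 + 2 * -(2 * γ)) * deriv H s ≤ C * |deriv H s| := by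
    refine (le_abs_self _).trans ?_
    rw [abs_mul]
    refine mul_le_mul_of_nonneg_right (le_of_eq_of_le ?_ hC) (abs_nonneg _)
    ring_nf
  rw [Real.mul_rpow (Real.exp_pos _).le hpos.le, hweight]
  refine mul_le_mul_of_nonneg_left ?_ (by positivity)
  linarith [hH.iteratedDeriv_two_add_le s hs]

theorem IsLargeProfile.isLargeSupersolution {γ C a b : ℝ} {H : ℝ → ℝ}
    (hH : IsLargeProfile (1 + γ⁻¹) C (Ioo a b) H) (hγ : 0 < γ)
    (hdim : 2 * γ ≤ Module.finrank ℝ E - 2) (hC : |Module.finrank ℝ E - 2 - 4 * γ| ≤ C)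
    (hab : a < b) :
    IsLargeSupersolution (1 + γ⁻¹) (logAnnulus E a b)
      (fun x => Real.exp (-(2 * γ) * Real.log ‖x‖) * H (Real.log ‖x‖)) where
  pos x hx := mul_pos (Real.exp_pos _) (hH.pos _ (logAnnulus.log_norm_mem hx))
  contDiffAt x hx := by
    have hlog : ContDiffAt ℝ 2 (fun y : E => Real.log ‖y‖) x :=
      (contDiffAt_norm ℝ (logAnnulus.ne_zero hx)).log (norm_ne_zero_iff.2 (logAnnulus.ne_zero hx))
    exact (contDiffAt_const.mul hlog).exp.mul
      ((hH.contDiffAt _ (logAnnulus.log_norm_mem hx)).comp x hlog)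
  laplacian_le x hx := hH.laplacian_exp_mul_comp_log_norm_le hγ hdim hC (logAnnulus.ne_zero hx)
    (logAnnulus.log_norm_mem hx)
  tendsto_frontier y hy := by
    have hy₀ : y ≠ 0 := logAnnulus.closure_subset_compl_zero hy.1
    have hlog : ContinuousAt (fun x : E => Real.log ‖x‖) y :=
      continuous_norm.continuousAt.log (norm_ne_zero_iff.2 hy₀)
    refine Tendsto.pos_mul_atTop (Real.exp_pos (-(2 * γ) * Real.log ‖y‖))
      (hlog.const_mul (-(2 * γ))).rexp.continuousWithinAt ?_
    exact (hH.tendsto_frontier _ (logAnnulus.log_norm_mem_frontier hab hy)).comp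
      (hlog.continuousWithinAt.tendsto_nhdsWithin fun _ => logAnnulus.log_norm_mem)

theorem IsSubsolution.nonpos {γ : ℝ} {w : E → ℝ → ℝ} (hw : IsSubsolution (1 + γ⁻¹) {0}ᶜ w)
    (hγ : 0 < γ) (hdim : 2 * γ ≤ Module.finrank ℝ E - 2) {x : E} (hx : x ≠ 0) {t : ℝ}
    (ht : 0 ≤ t) : w x t ≤ 0 := by
  set C := |Module.finrank ℝ E - 2 - 4 * γ|
  set s := Real.log ‖x‖
  have hbarrier : ∀ᶠ k : ℝ in atTop, w x t ≤
      Real.exp (-(2 * γ) * s) * (decayingProfile γ C (k + s) + decayingProfile γ C (k - s)) := by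
    filter_upwards [eventually_gt_atTop |s|] with k hk
    refine hw.le_of_isLargeSupersolution
      ((isLargeProfile_decayingProfile_add_reflection hγ (abs_nonneg _) k).isLargeSupersolution
        hγ hdim le_rfl ?_) (by positivity) logAnnulus.isOpen logAnnulus.isBounded
      logAnnulus.closure_subset_compl_zero ((logAnnulus.mem_iff hx).2 (abs_lt.1 hk)) ht
    linarith [abs_nonneg s]
  have hvanish : Tendsto (fun k : ℝ => Real.exp (-(2 * γ) * s) *
      (decayingProfile γ C (k + s) + decayingProfile γ C (k - s))) atTop (𝓝 0) := by
    have h := tendsto_decayingProfile_atTop (C := C) hγ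
    simpa [sub_eq_add_neg] using ((h.comp (tendsto_atTop_add_const_right _ s tendsto_id)).add
      (h.comp (tendsto_atTop_add_const_right _ (-s) tendsto_id))).const_mul
        (Real.exp (-(2 * γ) * s))
  exact ge_of_tendsto hvanish hbarrier

end EmdenFowler

namespace IsClassicalSolution

variable {n : ℕ} {p : ℝ} {g₁ g₂ : EuclideanSpace ℝ (Fin n) → ℝ}
  {u₁ u₂ : EuclideanSpace ℝ (Fin n) → ℝ → ℝ}

theorem sub_isSubsolution (h₁ : IsClassicalSolution n p g₁ u₁)
    (h₂ : IsClassicalSolution n p g₂ u₂) (hg : ∀ x, x ≠ 0 → g₁ x ≤ g₂ x) (hp : 1 ≤ p) :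
    IsSubsolution p {0}ᶜ (fun x t => u₁ x t - u₂ x t) where
  continuousOn := h₁.continuousOn.sub h₂.continuousOn
  contDiffAt_space x hx t ht := (h₁.contDiff_space x hx t ht).sub (h₂.contDiff_space x hx t ht)
  differentiableAt_time x hx t ht :=
    ((h₁.contDiff_time x hx t ht).differentiableAt (by simp)).sub
      ((h₂.contDiff_time x hx t ht).differentiableAt (by simp))
  deriv_le x hx t ht hpos := by
    have hspace₁ := h₁.contDiff_space x hx t ht
    have hspace₂ := h₂.contDiff_space x hx t ht
    have hrpow := Real.add_rpow_le_rpow_add hpos.le (h₂.nonneg x hx t ht) hp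
    rw [sub_add_cancel] at hrpow
    have htime : deriv (fun s => u₁ x s - u₂ x s) t = deriv (u₁ x) t - deriv (u₂ x) t :=
      deriv_fun_sub ((h₁.contDiff_time x hx t ht).differentiableAt (by simp))
        ((h₂.contDiff_time x hx t ht).differentiableAt (by simp))
    have hlaplacian : Δ (fun y => u₁ y t - u₂ y t) x =
        Δ (fun y => u₁ y t) x - Δ (fun y => u₂ y t) x := hspace₁.laplacian_sub hspace₂
    rw [htime, hlaplacian, h₁.pde x hx t ht, h₂.pde x hx t ht,
      laplacian_eq_innerProductSpace_laplacian hspace₁,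
      laplacian_eq_innerProductSpace_laplacian hspace₂]
    linarith
  initial_nonpos x hx := by
    rw [h₁.initial x hx, h₂.initial x hx]
    exact sub_nonpos.2 (hg x hx)

theorem le_of_initial_le (h₁ : IsClassicalSolution n p g₁ u₁)
    (h₂ : IsClassicalSolution n p g₂ u₂) (hg : ∀ x, x ≠ 0 → g₁ x ≤ g₂ x) (hp : 1 < p)
    (hdim : 2 * (p - 1)⁻¹ ≤ n - 2) {x : EuclideanSpace ℝ (Fin n)} (hx : x ≠ 0) {t : ℝ}
    (ht : 0 ≤ t) : u₁ x t ≤ u₂ x t := by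
  have hsub := h₁.sub_isSubsolution h₂ hg hp.le
  rw [show p = 1 + (p - 1)⁻¹⁻¹ by simp] at hsub
  exact sub_nonpos.1 (hsub.nonpos (inv_pos.2 (sub_pos.2 hp)) (by simpa using hdim) hx ht)

end IsClassicalSolution

/-- if `n ≥ 3` and `p ≥ n/(n-2)`, the classical solution of (P) is
unique for every continuous nonnegative initial datum `g`. -/
theorem uniqueness_of_punctured_cauchy_problem
    (n : ℕ) (hn : 3 ≤ n) (p : ℝ) (hpn : (n : ℝ) / ((n : ℝ) - 2) ≤ p)
    (g : EuclideanSpace ℝ (Fin n) → ℝ)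
    (hg_cont : ContinuousOn g {x : EuclideanSpace ℝ (Fin n) | x ≠ 0})
    (hg_nonneg : ∀ x : EuclideanSpace ℝ (Fin n), x ≠ 0 → 0 ≤ g x)
    (u₁ u₂ : EuclideanSpace ℝ (Fin n) → ℝ → ℝ)
    (h₁ : IsClassicalSolution n p g u₁) (h₂ : IsClassicalSolution n p g u₂) :
    ∀ x : EuclideanSpace ℝ (Fin n), x ≠ 0 → ∀ t : ℝ, 0 ≤ t → u₁ x t = u₂ x t := by
  have hn₂ : 0 < (n : ℝ) - 2 := by
    have : (3 : ℝ) ≤ n := by exact_mod_cast hn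
    linarith
  have hexponent : 2 / ((n : ℝ) - 2) ≤ p - 1 := by
    refine le_sub_iff_add_le.2 (le_of_eq_of_le ?_ hpn)
    field_simp
    ring
  have hp : 1 < p := sub_pos.1 ((div_pos two_pos hn₂).trans_le hexponent)
  have hdim : 2 * (p - 1)⁻¹ ≤ n - 2 := by
    rw [← div_eq_mul_inv]
    exact (div_le_comm₀ hn₂ (sub_pos.2 hp)).1 hexponent
  intro x hx t ht
  exact le_antisymm (h₁.le_of_initial_le h₂ (fun _ _ => le_rfl) hp hdim hx ht)
    (h₂.le_of_initial_le h₁ (fun _ _ => le_rfl) hp hdim hx ht)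
end
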